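/- There exists an absolute constant c > 0 such that the following holds. Let A be a finite nonempty set of scalars and L a finite nonempty subset of the affine group, and let Im_L(A) := {a·x + b : (a,b) ∈ L, x ∈ A}. If the field is R, then |Im_L(A)| ≥ c·min{ |A|², (|A|²·|L|⁴/E(L))^(1/3) }. If the field is F_p for a prime p, then |Im_L(A)| ≥ c·min{ p, |A|², (|A|³·|L|⁴/E(L))^(1/4) }. -/

import Mathlib

/-- Composition in `Aff(F)` of transformations `(a,b)`, acting as `x ↦ ax + b`:
`(a,b)∘(c,d) = (ac, ad + b)`. -/
def acomp {F : Type*} [Field F] (l m : F × F) : F × F := (l.1 * m.1, l.1 * m.2 + l.2)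

/-- Inverse in `Aff(F)` of a transformation `(a,b)` with `a ≠ 0`. -/
noncomputable def ainv {F : Type*} [Field F] (l : F × F) : F × F :=
  (l.1⁻¹, -(l.1⁻¹ * l.2))

/-- The energy of a finite set of affine transformations:
`E(L) = #{(l₁,l₂,l₁',l₂') ∈ L⁴ : l₁⁻¹∘l₂ = l₁'⁻¹∘l₂'}`. -/
noncomputable def affEnergy {F : Type*} [Field F] (L : Finset (F × F)) : ℕ :=
  Set.ncard {q : (F × F) × (F × F) × (F × F) × (F × F) |
    q.1 ∈ L ∧ q.2.1 ∈ L ∧ q.2.2.1 ∈ L ∧ q.2.2.2 ∈ L ∧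
    acomp (ainv q.1) q.2.1 = acomp (ainv q.2.2.1) q.2.2.2}

/-- The image set `Im_L(A) = {a·x + b : (a,b) ∈ L, x ∈ A}`. -/
noncomputable def imSet {F : Type*} [Field F] [DecidableEq F]
    (L : Finset (F × F)) (A : Finset F) : Finset F :=
  (L ×ˢ A).image fun q => q.1.1 * q.2 + q.1.2


set_option linter.unusedSectionVars false

namespace LI
open MvPolynomial

section bez
variable {K : Type*} [Field K] [Infinite K]

/-- Lines of type 1: `(a,s,t)` is `X = a, Z = sY + t`; coordinates are `![Z, X, Y]`. -/
def On1 (f : MvPolynomial (Fin 3) K) (l : K × K × K) : Prop :=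
  ∀ y : K, eval ![l.2.1 * y + l.2.2, l.1, y] f = 0

/-- Lines of type 2: `(c,s,t)` is `Y = c, Z = sX + t`. -/
def On2 (f : MvPolynomial (Fin 3) K) (l : K × K × K) : Prop :=
  ∀ x : K, eval ![l.2.1 * x + l.2.2, x, l.1] f = 0

lemma card_le_of_vanish2 (r : MvPolynomial (Fin 2) K) (hr : r ≠ 0) (S : Finset K)
    (h : ∀ a ∈ S, ∀ y, eval ![a, y] r = 0) : S.card ≤ r.totalDegree := by
  obtain ⟨v, hv⟩ : ∃ v, eval v r ≠ 0 := by
    by_contra! hc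
    exact hr (MvPolynomial.funext (by simpa using hc))
  set φ : Polynomial K := aeval ![Polynomial.X, Polynomial.C (v 1)] r with hφ
  have hev : ∀ x, φ.eval x = eval ![x, v 1] r := by
    intro x
    have : (Polynomial.evalRingHom x).comp (aeval ![Polynomial.X, Polynomial.C (v 1)] : MvPolynomial (Fin 2) K →ₐ[K] Polynomial K).toRingHom = eval ![x, v 1] := by
      apply MvPolynomial.ringHom_ext
      · intro a; simp
      · intro i; fin_cases i <;> simp
    exact congrArg (fun g => g r) this
  have hne : φ ≠ 0 := by
    intro h0
    apply hv
    have := hev (v 0)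
    rw [h0] at this
    have e : v = ![v 0, v 1] := by ext i; fin_cases i <;> rfl
    rw [e]; simpa using this.symm
  have hd : φ.natDegree ≤ r.totalDegree * 1 := by
    apply MvPolynomial.aeval_natDegree_le r le_rfl
    intro i; fin_cases i <;> simp
  have : S.val ⊆ φ.roots := by
    intro a ha
    rw [Polynomial.mem_roots hne, Polynomial.IsRoot, hev]
    exact h a ha _
  calc S.card ≤ φ.natDegree := Polynomial.card_le_degree_of_subset_roots this
    _ ≤ _ := by omega

lemma totalDegree_coeff_fse (f : MvPolynomial (Fin 3) K) (i : ℕ) :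
    ((finSuccEquiv K 2 f).coeff i).totalDegree ≤ f.totalDegree := by
  by_cases h : (finSuccEquiv K 2 f).coeff i = 0
  · simp [h]
  · have := totalDegree_coeff_finSuccEquiv_add_le f i h; omega

lemma natDegree_fse_le (f : MvPolynomial (Fin 3) K) :
    (finSuccEquiv K 2 f).natDegree ≤ f.totalDegree := by
  rw [natDegree_finSuccEquiv]; exact degreeOf_le_totalDegree f 0

lemma totalDegree_det_le {n D : ℕ} (M : Matrix (Fin n) (Fin n) (MvPolynomial (Fin 2) K))
    (h : ∀ i j, (M i j).totalDegree ≤ D) : M.det.totalDegree ≤ n * D := by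
  rw [Matrix.det_apply]
  apply totalDegree_finsetSum_le
  intro σ _
  have h1 : ((∏ i, M (σ i) i)).totalDegree ≤ n * D := by
    refine (totalDegree_finsetProd _ _).trans ?_
    refine (Finset.sum_le_sum (fun i _ => h (σ i) i)).trans ?_
    simp
  rcases Int.units_eq_one_or (Equiv.Perm.sign σ) with h' | h' <;> simp [h', h1]

lemma totalDegree_resultant_le (f g : MvPolynomial (Fin 3) K) :
    ((finSuccEquiv K 2 f).resultant (finSuccEquiv K 2 g)).totalDegree ≤
      (f.totalDegree + g.totalDegree) * (f.totalDegree + g.totalDegree) := by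
  unfold Polynomial.resultant
  have : ∀ i j, ((finSuccEquiv K 2 f).sylvester (finSuccEquiv K 2 g)
      (finSuccEquiv K 2 f).natDegree (finSuccEquiv K 2 g).natDegree i j).totalDegree ≤
      f.totalDegree + g.totalDegree := by
    intro i j
    simp only [Polynomial.sylvester, Matrix.of_apply]
    refine Fin.addCases (fun j => ?_) (fun j => ?_) j
    · simp only [Fin.addCases_left]
      split_ifs
      · have := totalDegree_coeff_fse g (i - j); omega
      · simp
    · simp only [Fin.addCases_right]
      split_ifs
      · have := totalDegree_coeff_fse f (i - j); omega
      · simp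
  refine (totalDegree_det_le _ this).trans ?_
  gcongr
  · exact natDegree_fse_le f
  · exact natDegree_fse_le g

lemma eval3 (f : MvPolynomial (Fin 3) K) (z x y : K) :
    eval ![z, x, y] f = Polynomial.eval z (Polynomial.map (eval ![x, y]) (finSuccEquiv K 2 f)) :=
  eval_eq_eval_mv_eval' ![x, y] z f

theorem bezout1 (f g : MvPolynomial (Fin 3) K) (hf : Irreducible f) (hfg : ¬ f ∣ g)
    (S : Finset (K × K × K)) (hS : Set.InjOn Prod.fst (S : Set (K × K × K)))
    (h1 : ∀ l ∈ S, On1 f l) (h2 : ∀ l ∈ S, On1 g l) :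
    S.card ≤ (f.totalDegree + g.totalDegree) ^ 2 := by
  classical
  set F := finSuccEquiv K 2 f with hF
  set G := finSuccEquiv K 2 g with hG
  have hFirr : Irreducible F := by
    rw [hF]; exact (MulEquiv.irreducible_iff (finSuccEquiv K 2)).2 hf
  have hFG : ¬ F ∣ G := by
    intro h; apply hfg
    have := map_dvd (finSuccEquiv K 2).symm h
    simpa [hF, hG] using this
  have hdpos : 1 ≤ f.totalDegree := by
    by_contra hc
    have h0 : f.totalDegree = 0 := by omega
    rw [totalDegree_eq_zero_iff_eq_C] at h0
    rw [h0] at hf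
    have hu : IsUnit (C (coeff 0 f) : MvPolynomial (Fin 3) K) := by
      have : coeff 0 f ≠ 0 := by
        intro hh; rw [hh] at hf; simp at hf
      exact (isUnit_iff_ne_zero.2 this).map C
    exact hf.not_isUnit hu
  rw [← Finset.card_image_of_injOn hS]
  have key : ∀ r : MvPolynomial (Fin 2) K, r ≠ 0 → r.totalDegree ≤ (f.totalDegree + g.totalDegree) ^ 2 →
      (∀ l ∈ S, ∀ y, eval ![l.1, y] r = 0) → (S.image Prod.fst).card ≤ (f.totalDegree + g.totalDegree) ^ 2 := by
    intro r hr hd hv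
    refine (card_le_of_vanish2 r hr _ ?_).trans hd
    intro a ha y
    obtain ⟨l, hl, rfl⟩ := Finset.mem_image.1 ha
    exact hv l hl y
  by_cases hdeg : F.natDegree = 0
  · obtain ⟨r, hr⟩ := Polynomial.natDegree_eq_zero.1 hdeg
    refine key r ?_ ?_ ?_
    · rintro rfl; rw [← hr] at hFirr; simp at hFirr
    · have : r = F.coeff 0 := by rw [← hr]; simp
      rw [this]
      refine (totalDegree_coeff_fse f 0).trans ?_
      exact (Nat.le_add_right _ _).trans (Nat.le_self_pow (by norm_num) _)
    · intro l hl y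
      have := h1 l hl y
      rw [eval3, ← hF, ← hr] at this
      simpa using this
  · have hprim : F.IsPrimitive := hFirr.isPrimitive hdeg
    set r := F.resultant G with hr
    refine key r ?_ ?_ ?_
    · have hirr2 := (hprim.irreducible_iff_irreducible_map_fraction_map (K := FractionRing (MvPolynomial (Fin 2) K))).1 hFirr
      have hnd : ¬ F.map (algebraMap _ (FractionRing (MvPolynomial (Fin 2) K))) ∣ G.map (algebraMap _ _) := by
        rw [← hprim.dvd_iff_fraction_map_dvd_fraction_map (FractionRing (MvPolynomial (Fin 2) K))]; exact hFG
      have hcop := (hirr2.coprime_iff_not_dvd).2 hnd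
      intro h0
      have hm := Polynomial.resultant_map_map (m := F.natDegree) (n := G.natDegree) (f := F) (g := G) (algebraMap _ (FractionRing (MvPolynomial (Fin 2) K)))
      rw [← hr, h0, map_zero] at hm
      have hinj := FaithfulSMul.algebraMap_injective (MvPolynomial (Fin 2) K) (FractionRing (MvPolynomial (Fin 2) K))
      have e1 := Polynomial.natDegree_map_eq_of_injective hinj F
      have e2 := Polynomial.natDegree_map_eq_of_injective hinj G
      rw [← e1, ← e2, Polynomial.resultant_eq_zero_iff] at hm
      exact hm.2 hcop
    · rw [sq]; exact totalDegree_resultant_le f g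
    · intro l hl y
      obtain ⟨p, q, -, -, e⟩ := Polynomial.exists_mul_add_mul_eq_C_resultant F G le_rfl le_rfl (Or.inl hdeg)
      have e' := congrArg (fun P => Polynomial.eval (l.2.1 * y + l.2.2) (Polynomial.map (eval ![l.1, y]) P)) e
      simp only [Polynomial.map_add, Polynomial.map_mul, Polynomial.eval_add, Polynomial.eval_mul, Polynomial.map_C, Polynomial.eval_C] at e'
      rw [hF, hG, ← eval3, ← eval3, h1 l hl y, h2 l hl y] at e'
      simpa using e'.symm

end bez
end LI
set_option linter.unusedSectionVars false

namespace LI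
open MvPolynomial

section flex
variable {K : Type*} [Field K] [Infinite K]

lemma pderiv_swap (i j : Fin 3) (f : MvPolynomial (Fin 3) K) :
    pderiv i (pderiv j f) = pderiv j (pderiv i f) := by
  ext m
  simp only [coeff_pderiv]
  rcases eq_or_ne i j with rfl | h
  · rfl
  · rw [add_right_comm]
    simp [Finsupp.single_apply, h, h.symm]
    ring

lemma totalDegree_pderiv_le (i : Fin 3) (f : MvPolynomial (Fin 3) K) :
    (pderiv i f).totalDegree ≤ f.totalDegree - 1 := by
  rw [MvPolynomial.totalDegree]
  refine Finset.sup_le ?_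
  intro m hm
  rw [mem_support_iff, coeff_pderiv] at hm
  have hm' : m + Finsupp.single i 1 ∈ f.support := by
    rw [mem_support_iff]; intro h; apply hm; rw [h]; simp
  have := le_totalDegree hm'
  rw [Finsupp.sum_add_index' (by simp) (by simp)] at this
  simp at this
  omega

lemma deriv_aeval (w : Fin 3 → Polynomial K) (f : MvPolynomial (Fin 3) K) :
    Polynomial.derivative (aeval w f) = ∑ i, aeval w (pderiv i f) * Polynomial.derivative (w i) := by
  induction f using MvPolynomial.induction_on with
  | C a => simp
  | add p q hp hq => simp [hp, hq, add_mul, Finset.sum_add_distrib]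
  | mul_X p n hp =>
    have key : ∀ i, aeval w (pderiv i (p * X n)) * Polynomial.derivative (w i) =
        aeval w (pderiv i p) * Polynomial.derivative (w i) * w n
        + (if i = n then aeval w p * Polynomial.derivative (w n) else 0) := by
      intro i
      rw [pderiv_mul, pderiv_X]
      by_cases h : i = n
      · subst h
        simp only [Pi.single_eq_same, map_add, map_mul, aeval_X, map_one, if_true]; ring
      · rw [Pi.single_eq_of_ne (Ne.symm h), if_neg h]
        simp only [map_add, map_mul, aeval_X, map_zero, mul_zero]; ring
    rw [Finset.sum_congr rfl (fun i _ => key i), Finset.sum_add_distrib, ← Finset.sum_mul, ← hp,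
      Finset.sum_ite_eq' Finset.univ n, if_pos (Finset.mem_univ n), map_mul, aeval_X, Polynomial.derivative_mul]

noncomputable def res1 (l : K × K × K) : MvPolynomial (Fin 3) K →ₐ[K] Polynomial K :=
  aeval ![Polynomial.C l.2.1 * Polynomial.X + Polynomial.C l.2.2, Polynomial.C l.1, Polynomial.X]

lemma eval_res1 (l : K × K × K) (f : MvPolynomial (Fin 3) K) (y : K) :
    (res1 l f).eval y = eval ![l.2.1 * y + l.2.2, l.1, y] f := by
  have : (Polynomial.evalRingHom y).comp (res1 l).toRingHom = eval ![l.2.1 * y + l.2.2, l.1, y] := by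
    apply MvPolynomial.ringHom_ext
    · intro a; simp [res1]
    · intro i; fin_cases i <;> simp [res1]
  exact congrArg (fun g => g f) this

lemma natDegree_res1 (l : K × K × K) (f : MvPolynomial (Fin 3) K) :
    (res1 l f).natDegree ≤ f.totalDegree := by
  have := MvPolynomial.aeval_natDegree_le f le_rfl
    ![Polynomial.C l.2.1 * Polynomial.X + Polynomial.C l.2.2, Polynomial.C l.1, Polynomial.X] (n := 1) ?_
  · simpa [res1] using this
  · intro i; fin_cases i
    · exact Polynomial.natDegree_linear_le (a := l.2.1) (b := l.2.2)
    · simp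
    · simp

lemma on1_iff (l : K × K × K) (f : MvPolynomial (Fin 3) K) : On1 f l ↔ res1 l f = 0 := by
  constructor
  · intro h
    apply Polynomial.funext
    intro y; rw [eval_res1, h y]; simp
  · intro h y
    rw [← eval_res1, h]; simp

lemma deriv_res1 (l : K × K × K) (f : MvPolynomial (Fin 3) K) :
    Polynomial.derivative (res1 l f) = res1 l (pderiv 2 f) + Polynomial.C l.2.1 * res1 l (pderiv 0 f) := by
  unfold res1
  rw [deriv_aeval, Fin.sum_univ_three]
  simp
  ring

/-- a polynomial with more zeros than its degree on a line vanishes on the line. -/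
lemma on1_of_card (l : K × K × K) (f : MvPolynomial (Fin 3) K) (S : Finset K)
    (hS : ∀ y ∈ S, eval ![l.2.1 * y + l.2.2, l.1, y] f = 0) (hc : f.totalDegree < S.card) : On1 f l := by
  rw [on1_iff]
  refine Polynomial.eq_zero_of_natDegree_lt_card_of_eval_eq_zero' _ S ?_ ?_
  · intro y hy; rw [eval_res1]; exact hS y hy
  · exact (natDegree_res1 l f).trans_lt hc

/-- the flex polynomial in the planes `X = const` (variable `i` is the other one). -/
noncomputable def Q (i : Fin 3) (f : MvPolynomial (Fin 3) K) : MvPolynomial (Fin 3) K :=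
  pderiv i (pderiv i f) * pderiv 0 f ^ 2 - 2 * pderiv i f * pderiv 0 f * pderiv 0 (pderiv i f)
    + pderiv i f ^ 2 * pderiv 0 (pderiv 0 f)

lemma totalDegree_Q_le (i : Fin 3) (f : MvPolynomial (Fin 3) K) :
    (Q i f).totalDegree ≤ 3 * f.totalDegree := by
  have h1 := totalDegree_pderiv_le i f
  have h0 := totalDegree_pderiv_le 0 f
  have h2 := totalDegree_pderiv_le i (pderiv i f)
  have h3 := totalDegree_pderiv_le 0 (pderiv i f)
  have h4 := totalDegree_pderiv_le 0 (pderiv 0 f)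
  unfold Q
  refine (totalDegree_add _ _).trans (max_le ((totalDegree_sub _ _).trans (max_le ?_ ?_)) ?_)
  · refine (totalDegree_mul _ _).trans ?_
    have := totalDegree_pow (pderiv 0 f) 2
    omega
  · refine (totalDegree_mul _ _).trans ?_
    have a1 := totalDegree_mul (2 * pderiv i f) (pderiv 0 f)
    have a2 := totalDegree_mul (2 : MvPolynomial (Fin 3) K) (pderiv i f)
    have a3 : (2 : MvPolynomial (Fin 3) K).totalDegree = 0 := by
      have : (2 : MvPolynomial (Fin 3) K) = C 2 := (map_ofNat C 2).symm
      rw [this, totalDegree_C]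
    omega
  · refine (totalDegree_mul _ _).trans ?_
    have := totalDegree_pow (pderiv i f) 2
    omega

lemma res1_Q (l : K × K × K) (f : MvPolynomial (Fin 3) K) :
    ∃ v, res1 l (Q 2 f) = res1 l (pderiv 0 f) ^ 2 * Polynomial.derivative (Polynomial.derivative (res1 l f))
      + Polynomial.derivative (res1 l f) * v := by
  have e1 := deriv_res1 l f
  have e2 : Polynomial.derivative (Polynomial.derivative (res1 l f)) =
      res1 l (pderiv 2 (pderiv 2 f)) + 2 * Polynomial.C l.2.1 * res1 l (pderiv 0 (pderiv 2 f)) +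
      Polynomial.C l.2.1 ^ 2 * res1 l (pderiv 0 (pderiv 0 f)) := by
    rw [e1, Polynomial.derivative_add, Polynomial.derivative_C_mul, deriv_res1, deriv_res1, pderiv_swap 2 0]
    ring
  refine ⟨- 2 * res1 l (pderiv 0 f) * res1 l (pderiv 0 (pderiv 2 f)) +
    (Polynomial.derivative (res1 l f) - 2 * Polynomial.C l.2.1 * res1 l (pderiv 0 f)) * res1 l (pderiv 0 (pderiv 0 f)), ?_⟩
  rw [e2, e1]
  simp only [Q, map_add, map_sub, map_mul, map_pow, map_ofNat]
  ring

lemma on1_Q (l : K × K × K) (f : MvPolynomial (Fin 3) K) (h : On1 f l) : On1 (Q 2 f) l := by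
  rw [on1_iff] at h ⊢
  obtain ⟨v, hv⟩ := res1_Q l f
  rw [hv, h]; simp

lemma flex1 (f : MvPolynomial (Fin 3) K) (hQ : f ∣ Q 2 f)
    (hchar : ∀ k : ℕ, 0 < k → k ≤ f.totalDegree → (k : K) ≠ 0)
    (l : K × K × K) (y0 : K) (h0 : eval ![l.2.1 * y0 + l.2.2, l.1, y0] f = 0)
    (hz : eval ![l.2.1 * y0 + l.2.2, l.1, y0] (pderiv 0 f) ≠ 0)
    (hs : eval ![l.2.1 * y0 + l.2.2, l.1, y0] (pderiv 2 f) +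
      l.2.1 * eval ![l.2.1 * y0 + l.2.2, l.1, y0] (pderiv 0 f) = 0) : On1 f l := by
  rw [on1_iff]
  by_contra hne
  obtain ⟨w, hw⟩ := hQ
  obtain ⟨v, hv⟩ := res1_Q l f
  rw [hw, map_mul] at hv
  have hd := natDegree_res1 l f
  have hd0 := deriv_res1 l f
  set φ := res1 l f with hφ
  set a := res1 l (pderiv 0 f) with ha
  have r0 : φ.IsRoot y0 := by rw [Polynomial.IsRoot, hφ, eval_res1]; exact h0
  have r1 : (Polynomial.derivative φ).IsRoot y0 := by
    rw [Polynomial.IsRoot, hd0, ha]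
    simp only [Polynomial.eval_add, Polynomial.eval_mul, Polynomial.eval_C, eval_res1]; exact hs
  have ha0 : a.eval y0 ≠ 0 := by rw [ha, eval_res1]; exact hz
  have hk := (Polynomial.one_lt_rootMultiplicity_iff_isRoot hne).2 ⟨r0, r1⟩
  obtain ⟨ψ, hψ, hnd⟩ := Polynomial.exists_eq_pow_rootMultiplicity_mul_and_not_dvd φ hne y0
  obtain ⟨j, hj⟩ : ∃ j, φ.rootMultiplicity y0 = j + 2 := ⟨_, (Nat.sub_add_cancel hk).symm⟩
  have hle : j + 2 ≤ f.totalDegree := by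
    rw [← hj]; 
    refine le_trans ?_ hd
    have := Polynomial.natDegree_le_of_dvd (Polynomial.pow_rootMultiplicity_dvd φ y0) hne
    simpa using this
  rw [hj] at hψ
  rw [Polynomial.dvd_iff_isRoot, Polynomial.IsRoot] at hnd
  rw [hψ] at hv
  set x := Polynomial.X - Polynomial.C y0 with hx
  have dx : Polynomial.derivative x = 1 := by simp [hx]
  simp only [Polynomial.derivative_mul, Polynomial.derivative_pow, dx, Polynomial.derivative_add, Polynomial.derivative_C] at hv
  have hx0 : x ≠ 0 := Polynomial.X_sub_C_ne_zero y0
  have ex : x.eval y0 = 0 := by simp [hx]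
  have hv2 : x ^ j * (x ^ 2 * ψ * res1 l w) = x ^ j * (a ^ 2 * (((j + 2 : ℕ) : Polynomial K) * ((j+1 : ℕ) : Polynomial K) * ψ
      + x * (2 * ((j + 2 : ℕ) : Polynomial K) * Polynomial.derivative ψ + x * Polynomial.derivative (Polynomial.derivative ψ)))
      + x * ((((j + 2 : ℕ) : Polynomial K) * ψ + x * Polynomial.derivative ψ) * v)) := by
    calc _ = x ^ (j + 2) * ψ * res1 l w := by ring
      _ = _ := by
        rw [hv]
        have q1 : j + 2 - 1 = j + 1 := rfl
        have q2 : j + 1 - 1 = j := rfl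
        simp only [q1, q2, Polynomial.C_eq_natCast, Polynomial.derivative_one, mul_one, zero_mul, zero_add]
        push_cast
        ring
  have hv3 := mul_left_cancel₀ (pow_ne_zero j hx0) hv2
  have hv4 := congrArg (Polynomial.eval y0) hv3
  simp only [Polynomial.eval_add, Polynomial.eval_mul, Polynomial.eval_pow, ex, Polynomial.eval_natCast] at hv4
  have c1 := hchar (j+2) (by omega) hle
  have c2 := hchar (j+1) (by omega) (by omega)
  have : Polynomial.eval y0 a ^ 2 * (((j + 2 : ℕ) : K) * ((j+1 : ℕ) : K) * Polynomial.eval y0 ψ) ≠ 0 :=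
    mul_ne_zero (pow_ne_zero _ ha0) (mul_ne_zero (mul_ne_zero c1 c2) hnd)
  apply this
  linear_combination -hv4

end flex
end LI
set_option linter.unusedSectionVars false

namespace LI
open MvPolynomial

section swp
variable {K : Type*} [Field K] [Infinite K]

/-- interchange of the variables `X` and `Y`. -/
noncomputable def sw : MvPolynomial (Fin 3) K ≃ₐ[K] MvPolynomial (Fin 3) K :=
  renameEquiv K (Equiv.swap 1 2)

lemma sw_apply (f : MvPolynomial (Fin 3) K) : sw f = rename (Equiv.swap (1 : Fin 3) 2) f := rfl

lemma eval_sw (f : MvPolynomial (Fin 3) K) (z x y : K) :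
    eval ![z, x, y] (sw f) = eval ![z, y, x] f := by
  rw [sw_apply, eval_rename]
  congr 2
  ext i; fin_cases i <;> simp [Equiv.swap_apply_def]

lemma sw_sw (f : MvPolynomial (Fin 3) K) : sw (sw f) = f := by
  simp [sw_apply, rename_rename, ← Equiv.coe_trans]

lemma on1_sw (f : MvPolynomial (Fin 3) K) (l) : On1 (sw f) l ↔ On2 f l := by
  simp only [On1, On2, eval_sw]

lemma on2_sw (f : MvPolynomial (Fin 3) K) (l) : On2 (sw f) l ↔ On1 f l := by
  simp only [On1, On2, eval_sw]

lemma totalDegree_sw (f : MvPolynomial (Fin 3) K) : (sw f).totalDegree = f.totalDegree :=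
  totalDegree_renameEquiv _ _

lemma sw_irr (f : MvPolynomial (Fin 3) K) : Irreducible (sw f) ↔ Irreducible f :=
  MulEquiv.irreducible_iff _

lemma sw_dvd (f g : MvPolynomial (Fin 3) K) : sw f ∣ sw g ↔ f ∣ g := map_dvd_iff _

lemma pderiv_sw0 (f : MvPolynomial (Fin 3) K) : pderiv 0 (sw f) = sw (pderiv 0 f) :=
  pderiv_rename (Equiv.swap (1 : Fin 3) 2).injective 0 f
lemma pderiv_sw1 (f : MvPolynomial (Fin 3) K) : pderiv 1 (sw f) = sw (pderiv 2 f) :=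
  pderiv_rename (Equiv.swap (1 : Fin 3) 2).injective 2 f
lemma pderiv_sw2 (f : MvPolynomial (Fin 3) K) : pderiv 2 (sw f) = sw (pderiv 1 f) :=
  pderiv_rename (Equiv.swap (1 : Fin 3) 2).injective 1 f

lemma Q_sw2 (f : MvPolynomial (Fin 3) K) : Q 2 (sw f) = sw (Q 1 f) := by
  simp only [Q, pderiv_sw0, pderiv_sw2, map_add, map_sub, map_mul, map_pow, map_ofNat]

lemma Q_sw1 (f : MvPolynomial (Fin 3) K) : Q 1 (sw f) = sw (Q 2 f) := by
  simp only [Q, pderiv_sw0, pderiv_sw1, map_add, map_sub, map_mul, map_pow, map_ofNat]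

lemma degreeOf_sw1 (f : MvPolynomial (Fin 3) K) : degreeOf 1 (sw f) = degreeOf 2 f :=
  degreeOf_rename_of_injective (Equiv.swap (1 : Fin 3) 2).injective 2

theorem bezout2 (f g : MvPolynomial (Fin 3) K) (hf : Irreducible f) (hfg : ¬ f ∣ g)
    (S : Finset (K × K × K)) (hS : Set.InjOn Prod.fst (S : Set (K × K × K)))
    (h1 : ∀ l ∈ S, On2 f l) (h2 : ∀ l ∈ S, On2 g l) :
    S.card ≤ (f.totalDegree + g.totalDegree) ^ 2 := by
  rw [← totalDegree_sw f, ← totalDegree_sw g]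
  refine bezout1 _ _ ((sw_irr f).2 hf) (by rwa [sw_dvd]) S hS ?_ ?_
  · intro l hl; rw [on1_sw]; exact h1 l hl
  · intro l hl; rw [on1_sw]; exact h2 l hl

lemma on2_of_card (l : K × K × K) (f : MvPolynomial (Fin 3) K) (S : Finset K)
    (hS : ∀ x ∈ S, eval ![l.2.1 * x + l.2.2, x, l.1] f = 0) (hc : f.totalDegree < S.card) : On2 f l := by
  rw [← on1_sw]
  refine on1_of_card l _ S ?_ (by rwa [totalDegree_sw])
  intro x hx; rw [eval_sw]; exact hS x hx

lemma flex2 (f : MvPolynomial (Fin 3) K) (hQ : f ∣ Q 1 f)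
    (hchar : ∀ k : ℕ, 0 < k → k ≤ f.totalDegree → (k : K) ≠ 0)
    (l : K × K × K) (x0 : K) (h0 : eval ![l.2.1 * x0 + l.2.2, x0, l.1] f = 0)
    (hz : eval ![l.2.1 * x0 + l.2.2, x0, l.1] (pderiv 0 f) ≠ 0)
    (hs : eval ![l.2.1 * x0 + l.2.2, x0, l.1] (pderiv 1 f) +
      l.2.1 * eval ![l.2.1 * x0 + l.2.2, x0, l.1] (pderiv 0 f) = 0) : On2 f l := by
  rw [← on1_sw]
  refine flex1 (sw f) (by rwa [Q_sw2, sw_dvd]) (by rwa [totalDegree_sw]) l x0 ?_ ?_ ?_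
  · rwa [eval_sw]
  · rwa [pderiv_sw0, eval_sw]
  · rwa [pderiv_sw0, pderiv_sw2, eval_sw, eval_sw]

lemma degreeOf_aevalX (v : Polynomial K) (i : Fin 3) (hi : i ≠ 2) :
    degreeOf i (Polynomial.aeval (X 2 : MvPolynomial (Fin 3) K) v) = 0 := by
  rw [Polynomial.aeval_eq_sum_range]
  refine Nat.le_zero.1 ((degreeOf_sum_le _ _ _).trans (Finset.sup_le ?_))
  intro j _
  rw [smul_eq_C_mul]
  refine (degreeOf_C_mul_le _ _ _).trans ?_
  rw [degreeOf_X_pow_of_ne _ hi]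

lemma step (f : MvPolynomial (Fin 3) K) (hf : Irreducible f) (hQ : f ∣ Q 1 f)
    (hchar : ∀ k : ℕ, 0 < k → k ≤ f.totalDegree → (k : K) ≠ 0)
    (l : K × K × K) (hl : On1 f l) (hz : ¬ On1 (pderiv 0 f) l) :
    degreeOf 0 f ≤ 1 ∧ degreeOf 1 f ≤ 1 := by
  classical
  obtain ⟨a, s, t⟩ := l
  set v := res1 (a, s, t) (pderiv 0 f) with hv
  set u := - res1 (a, s, t) (pderiv 1 f) with hu
  have hv0 : v ≠ 0 := by rw [hv]; intro h; exact hz ((on1_iff _ _).2 h)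
  set g : MvPolynomial (Fin 3) K := Polynomial.aeval (X 2) v * (X 0 - C s * X 2 - C t)
    - Polynomial.aeval (X 2) u * (X 1 - C a) with hg
  have ev : ∀ (w : Polynomial K) (z x y : K), eval ![z, x, y] (Polynomial.aeval (X 2) w) = w.eval y := by
    intro w z x y
    induction w using Polynomial.induction_on' with
    | add p q hp hq => simp [hp, hq]
    | monomial n c => simp [Polynomial.aeval_monomial]
  have evg : ∀ z x y : K, eval ![z, x, y] g = v.eval y * (z - s * y - t) - u.eval y * (x - a) := by
    intro z x y
    simp [hg, ev]
  obtain ⟨y1, hy1⟩ : ∃ y, v.eval y ≠ 0 := by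
    by_contra! h; exact hv0 (Polynomial.funext (by simpa using h))
  have hg0 : g ≠ 0 := by
    intro h
    have := evg (s * y1 + t + 1) a y1
    rw [h] at this
    rw [map_zero, sub_self, mul_zero, sub_zero] at this
    apply hy1
    linear_combination -this
  have hdvd : f ∣ g := by
    by_contra hfg
    have hinf : ((v.roots.toFinset : Set K)ᶜ).Infinite := (v.roots.toFinset.finite_toSet).infinite_compl
    obtain ⟨T, hT, hTc⟩ := hinf.exists_subset_card_eq ((f.totalDegree + g.totalDegree) ^ 2 + 1)
    set mk : K → K × K × K := fun c => (c, u.eval c / v.eval c, s * c + t - a * (u.eval c / v.eval c)) with hmk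
    have hb := bezout2 f g hf hfg (T.image mk) ?_ ?_ ?_
    · rw [Finset.card_image_of_injective _ (fun x y h => congrArg Prod.fst h), hTc] at hb
      omega
    · intro x hx y hy hxy
      simp only [Finset.coe_image, Set.mem_image] at hx hy
      obtain ⟨c, _, rfl⟩ := hx
      obtain ⟨c', _, rfl⟩ := hy
      have : c = c' := hxy
      rw [this]
    · intro m hm
      obtain ⟨c, hc, rfl⟩ := Finset.mem_image.1 hm
      have hvc : v.eval c ≠ 0 := by
        have := hT hc
        simpa [hv0] using this
      have e : u.eval c / v.eval c * a + (s * c + t - a * (u.eval c / v.eval c)) = s * c + t := by ring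
      refine flex2 f hQ hchar (mk c) a ?_ ?_ ?_
      · simp only [hmk]; rw [e]; exact hl c
      · simp only [hmk]; rw [e]
        rw [hv, eval_res1] at hvc; exact hvc
      · simp only [hmk]; rw [e]
        have e1 : eval ![s * c + t, a, c] (pderiv 0 f) = v.eval c := by rw [hv, eval_res1]
        have e2 : eval ![s * c + t, a, c] (pderiv 1 f) = - u.eval c := by rw [hu, Polynomial.eval_neg, eval_res1]; simp
        rw [e1, e2]; field_simp; ring
    · intro m hm
      obtain ⟨c, hc, rfl⟩ := Finset.mem_image.1 hm
      have hvc : v.eval c ≠ 0 := by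
        have := hT hc
        simpa [hv0] using this
      intro x
      rw [evg]
      simp only [hmk]
      field_simp; ring
  have hdg : ∀ i : Fin 3, i ≠ 2 → degreeOf i g ≤ 1 := by
    intro i hi
    have a1 : degreeOf i (X 0 - C s * X 2 - C t : MvPolynomial (Fin 3) K) ≤ 1 := by
      refine (degreeOf_sub_le _ _ _).trans (max_le ((degreeOf_sub_le _ _ _).trans (max_le ?_ ?_)) ?_)
      · rw [degreeOf_X]; split_ifs <;> simp
      · refine (degreeOf_C_mul_le _ _ _).trans ?_
        rw [degreeOf_X]; split_ifs <;> simp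
      · rw [degreeOf_C]; simp
    have a2 : degreeOf i (X 1 - C a : MvPolynomial (Fin 3) K) ≤ 1 := by
      refine (degreeOf_sub_le _ _ _).trans (max_le ?_ ?_)
      · rw [degreeOf_X]; split_ifs <;> simp
      · rw [degreeOf_C]; simp
    rw [hg]
    refine (degreeOf_sub_le _ _ _).trans (max_le ?_ ?_)
    · refine (degreeOf_mul_le _ _ _).trans ?_
      rw [degreeOf_aevalX _ i hi]; omega
    · refine (degreeOf_mul_le _ _ _).trans ?_
      rw [degreeOf_aevalX _ i hi]; omega
  obtain ⟨h, hh⟩ := hdvd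
  have hf0 := hf.ne_zero
  have hh0 : h ≠ 0 := by rintro rfl; simp at hh; exact hg0 hh
  have b : ∀ i : Fin 3, i ≠ 2 → degreeOf i f ≤ 1 := by
    intro i hi
    have := hdg i hi
    rw [hh, degreeOf_mul_eq hf0 hh0] at this
    omega
  exact ⟨b 0 (by decide), b 1 (by decide)⟩

lemma const_of_pderiv (f : MvPolynomial (Fin 3) K)
    (hchar : ∀ k : ℕ, 0 < k → k ≤ f.totalDegree → (k : K) ≠ 0)
    (h : ∀ i, pderiv i f = 0) : f = C (coeff 0 f) := by
  ext m
  rw [coeff_C]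
  split_ifs with hm
  · rw [hm]
  · obtain ⟨i, hi⟩ : ∃ i, m i ≠ 0 := by
      by_contra! hc
      exact hm (by ext i; simp [hc i])
    by_contra hne
    have hms : m ∈ f.support := by rwa [mem_support_iff]
    have := congrArg (coeff (m - Finsupp.single i 1)) (h i)
    rw [coeff_pderiv, coeff_zero] at this
    have e : m - Finsupp.single i 1 + Finsupp.single i 1 = m := by
      apply tsub_add_cancel_of_le
      rw [Finsupp.single_le_iff]; omega
    rw [e] at this
    have e2 : (m - Finsupp.single i 1 : Fin 3 →₀ ℕ) i + 1 = m i := by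
      rw [Finsupp.tsub_apply, Finsupp.single_eq_same]; omega
    have e3 : (((m - Finsupp.single i 1 : Fin 3 →₀ ℕ) i : ℕ) : K) + 1 = (m i : K) := by exact_mod_cast congrArg (Nat.cast : ℕ → K) e2
    rw [e3] at this
    refine hchar (m i) (by omega) ?_ ((mul_eq_zero.1 this).resolve_left hne)
    exact (monomial_le_degreeOf i hms).trans (degreeOf_le_totalDegree f i)

lemma dvd_pderiv_eq_zero (f : MvPolynomial (Fin 3) K) (hf : Irreducible f) (g : MvPolynomial (Fin 3) K)
    (hg : g.totalDegree ≤ f.totalDegree - 1) (h : f ∣ g) : g = 0 := by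
  by_contra h0
  have h1 := totalDegree_le_of_dvd_of_isDomain h h0
  have h2 : f.totalDegree = 0 := by omega
  have h3 := totalDegree_eq_zero_iff_eq_C.1 h2
  apply hf.not_isUnit
  rw [h3]
  apply IsUnit.map
  rw [isUnit_iff_ne_zero]
  intro h4
  rw [h4, C_0] at h3
  exact hf.ne_zero h3

lemma pderiv2_zero (f : MvPolynomial (Fin 3) K) (i : Fin 3) (h : degreeOf i f ≤ 1) :
    pderiv i (pderiv i f) = 0 := by
  ext m
  rw [coeff_pderiv, coeff_pderiv, coeff_zero]
  have : coeff (m + Finsupp.single i 1 + Finsupp.single i 1) f = 0 := by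
    by_contra hne
    have := monomial_le_degreeOf i (mem_support_iff.2 hne)
    simp at this
    omega
  rw [this]; simp

lemma normal_form (f : MvPolynomial (Fin 3) K) (h0 : degreeOf 0 f ≤ 1) (h1 : degreeOf 1 f ≤ 1)
    (h2 : degreeOf 2 f ≤ 1) (h01 : pderiv 0 (pderiv 1 f) = 0) (h02 : pderiv 0 (pderiv 2 f) = 0)
    (hz : pderiv 0 f ≠ 0) :
    ∃ e a b c d : K, e ≠ 0 ∧ ∀ z x y, eval ![z, x, y] f = e * z + a * (x * y) + b * x + c * y + d := by
  classical
  set e0 : Fin 3 →₀ ℕ := Finsupp.single 0 1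
  set e1 : Fin 3 →₀ ℕ := Finsupp.single 1 1
  set e2 : Fin 3 →₀ ℕ := Finsupp.single 2 1
  have hext : ∀ m m' : Fin 3 →₀ ℕ, m 0 = m' 0 → m 1 = m' 1 → m 2 = m' 2 → m = m' := by
    intro m m' q0 q1 q2; ext i; fin_cases i <;> assumption
  have key : ∀ m, coeff m f ≠ 0 → m = e0 ∨ m = e1 + e2 ∨ m = e1 ∨ m = e2 ∨ m = 0 := by
    intro m hm
    have d0 := (monomial_le_degreeOf 0 (mem_support_iff.2 hm)).trans h0
    have d1 := (monomial_le_degreeOf 1 (mem_support_iff.2 hm)).trans h1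
    have d2 := (monomial_le_degreeOf 2 (mem_support_iff.2 hm)).trans h2
    have n01 : ¬ (m 0 = 1 ∧ m 1 = 1) := by
      rintro ⟨q0, q1⟩
      have := congrArg (coeff (Finsupp.single 2 (m 2))) h01
      rw [coeff_pderiv, coeff_pderiv, coeff_zero] at this
      have e : Finsupp.single 2 (m 2) + Finsupp.single 0 1 + Finsupp.single 1 1 = m := by
        apply hext <;> simp [q0, q1]
      rw [e] at this
      simp [hm] at this
    have n02 : ¬ (m 0 = 1 ∧ m 2 = 1) := by
      rintro ⟨q0, q1⟩
      have := congrArg (coeff (Finsupp.single 1 (m 1))) h02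
      rw [coeff_pderiv, coeff_pderiv, coeff_zero] at this
      have e : Finsupp.single 1 (m 1) + Finsupp.single 0 1 + Finsupp.single 2 1 = m := by
        apply hext <;> simp [q0, q1]
      rw [e] at this
      simp [hm] at this
    rcases Nat.lt_or_ge (m 0) 1 with a0 | a0 <;> rcases Nat.lt_or_ge (m 1) 1 with a1 | a1 <;>
      rcases Nat.lt_or_ge (m 2) 1 with a2 | a2
    · right; right; right; right; apply hext <;> simp <;> omega
    · right; right; right; left; apply hext <;> simp [e2] <;> omega
    · right; right; left; apply hext <;> simp [e1] <;> omega
    · right; left; apply hext <;> simp [e1, e2] <;> omega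
    · left; apply hext <;> simp [e0] <;> omega
    · exact absurd ⟨by omega, by omega⟩ n02
    · exact absurd ⟨by omega, by omega⟩ n01
    · exact absurd ⟨by omega, by omega⟩ n02
  have hsub : f.support ⊆ {e0, e1 + e2, e1, e2, 0} := by
    intro m hm
    have := key m (mem_support_iff.1 hm)
    simpa using this
  have nn : ∀ (i : Fin 3) (m m' : Fin 3 →₀ ℕ), m i ≠ m' i → m ≠ m' := by
    intro i m m' h h'; exact h (by rw [h'])
  have hev : ∀ z x y, eval ![z, x, y] f = coeff e0 f * z + coeff (e1 + e2) f * (x * y) + coeff e1 f * x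
      + coeff e2 f * y + coeff 0 f := by
    intro z x y
    rw [eval_eq', Finset.sum_subset hsub]
    · rw [Finset.sum_insert, Finset.sum_insert, Finset.sum_insert, Finset.sum_insert, Finset.sum_singleton]
      · simp [Fin.prod_univ_three, e0, e1, e2]; ring
      · simp only [Finset.mem_singleton]; exact nn 2 _ _ (by simp [e2])
      · simp only [Finset.mem_insert, Finset.mem_singleton, not_or]
        exact ⟨nn 1 _ _ (by simp [e2, e1]), nn 1 _ _ (by simp [e1])⟩
      · simp only [Finset.mem_insert, Finset.mem_singleton, not_or]
        exact ⟨nn 2 _ _ (by simp [e2, e1]), nn 1 _ _ (by simp [e1, e2]), nn 1 _ _ (by simp [e1, e2])⟩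
      · simp only [Finset.mem_insert, Finset.mem_singleton, not_or]
        exact ⟨nn 0 _ _ (by simp [e2, e1, e0]), nn 0 _ _ (by simp [e1, e0]), nn 0 _ _ (by simp [e0, e2]), nn 0 _ _ (by simp [e0])⟩
    · intro m _ hm
      rw [notMem_support_iff.1 hm]; simp
  refine ⟨_, _, _, _, _, ?_, hev⟩
  intro he
  apply hz
  ext m
  rw [coeff_pderiv, coeff_zero]
  by_cases hm : coeff (m + Finsupp.single 0 1) f = 0
  · rw [hm]; simp
  · exfalso
    have := key _ hm
    have q : (m + Finsupp.single 0 1 : Fin 3 →₀ ℕ) 0 ≠ 0 := by simp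
    rcases this with h | h | h | h | h
    · rw [h] at hm; exact hm he
    all_goals rw [h] at q; simp [e1, e2] at q

theorem classify (f : MvPolynomial (Fin 3) K) (hf : Irreducible f) (two : (2 : K) ≠ 0)
    (hchar : ∀ k : ℕ, 0 < k → k ≤ f.totalDegree → (k : K) ≠ 0)
    (S1 S2 : Finset (K × K × K)) (i1 : Set.InjOn Prod.fst (S1 : Set (K × K × K)))
    (i2 : Set.InjOn Prod.fst (S2 : Set (K × K × K)))
    (h1 : ∀ l ∈ S1, On1 f l) (h2 : ∀ l ∈ S2, On2 f l)
    (c1 : 16 * f.totalDegree ^ 2 < S1.card) (c2 : 16 * f.totalDegree ^ 2 < S2.card) :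
    ∃ α β γ δ : K, (∀ l, On1 f l → l.2.1 = α * l.1 + γ ∧ l.2.2 = β * l.1 + δ) ∧
      (∀ l, On2 f l → l.2.1 = α * l.1 + β ∧ l.2.2 = γ * l.1 + δ) := by
  have bz1 : ∀ g : MvPolynomial (Fin 3) K, g.totalDegree ≤ 3 * f.totalDegree → (∀ l ∈ S1, On1 g l) → f ∣ g := by
    intro g hg hl
    by_contra hn
    have := bezout1 f g hf hn S1 i1 h1 hl
    have : (f.totalDegree + g.totalDegree) ^ 2 ≤ (4 * f.totalDegree) ^ 2 := Nat.pow_le_pow_left (by omega) 2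
    nlinarith
  have bz2 : ∀ g : MvPolynomial (Fin 3) K, g.totalDegree ≤ 3 * f.totalDegree → (∀ l ∈ S2, On2 g l) → f ∣ g := by
    intro g hg hl
    by_contra hn
    have := bezout2 f g hf hn S2 i2 h2 hl
    have : (f.totalDegree + g.totalDegree) ^ 2 ≤ (4 * f.totalDegree) ^ 2 := Nat.pow_le_pow_left (by omega) 2
    nlinarith
  have dlt : ∀ i, (pderiv i f).totalDegree ≤ f.totalDegree - 1 := fun i => totalDegree_pderiv_le i f
  have fz : pderiv 0 f ≠ 0 := by
    intro hz
    have fy : pderiv 2 f = 0 := by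
      refine dvd_pderiv_eq_zero f hf _ (dlt 2) (bz1 _ (by have := dlt 2; omega) ?_)
      intro l hl
      have := deriv_res1 l f
      rw [(on1_iff _ _).1 (h1 l hl), hz] at this
      rw [on1_iff]; simpa using this.symm
    have fx : pderiv 1 f = 0 := by
      refine dvd_pderiv_eq_zero f hf _ (dlt 1) (bz2 _ (by have := dlt 1; omega) ?_)
      intro l hl
      have := deriv_res1 l (sw f)
      rw [(on1_iff _ _).1 ((on1_sw f l).2 (h2 l hl)), pderiv_sw0, hz, pderiv_sw2] at this
      rw [← on1_sw, on1_iff]; simpa using this.symm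
    have hC := const_of_pderiv f hchar (by intro i; fin_cases i; exacts [hz, fx, fy])
    apply hf.not_isUnit
    rw [hC]
    apply IsUnit.map
    rw [isUnit_iff_ne_zero]
    intro h4
    rw [h4, C_0] at hC
    exact hf.ne_zero hC
  have nfz : ¬ f ∣ pderiv 0 f := fun h => fz (dvd_pderiv_eq_zero f hf _ (dlt 0) h)
  have Q2 : f ∣ Q 2 f := bz1 _ (totalDegree_Q_le 2 f) (fun l hl => on1_Q l f (h1 l hl))
  have Q1 : f ∣ Q 1 f := by
    refine bz2 _ (totalDegree_Q_le 1 f) (fun l hl => ?_)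
    rw [← on1_sw, ← Q_sw2]
    exact on1_Q l _ ((on1_sw f l).2 (h2 l hl))
  obtain ⟨l1, hl1, hl1z⟩ : ∃ l ∈ S1, ¬ On1 (pderiv 0 f) l := by
    by_contra! hc
    exact nfz (bz1 _ (by have := dlt 0; omega) hc)
  obtain ⟨l2, hl2, hl2z⟩ : ∃ l ∈ S2, ¬ On2 (pderiv 0 f) l := by
    by_contra! hc
    exact nfz (bz2 _ (by have := dlt 0; omega) hc)
  obtain ⟨d0, d1⟩ := step f hf Q1 hchar l1 (h1 l1 hl1) hl1z
  have d2 : degreeOf 2 f ≤ 1 := by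
    rw [← degreeOf_sw1]
    refine (step (sw f) ((sw_irr f).2 hf) (by rwa [Q_sw1, sw_dvd]) (by rwa [totalDegree_sw]) l2
      ((on1_sw f l2).2 (h2 l2 hl2)) ?_).2
    rw [pderiv_sw0, on1_sw]; exact hl2z
  have hpr : Prime f := hf.prime
  have mixed : ∀ i, degreeOf i f ≤ 1 → f ∣ Q i f → pderiv 0 (pderiv i f) = 0 := by
    intro i hi hQ
    rw [Q, pderiv2_zero f i hi, pderiv2_zero f 0 d0] at hQ
    have hQ' : f ∣ C 2 * (pderiv i f * (pderiv 0 f * pderiv 0 (pderiv i f))) := by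
      have e : C (2 : K) = (2 : MvPolynomial (Fin 3) K) := map_ofNat C 2
      rw [e, ← dvd_neg]
      convert hQ using 1; ring
    rcases hpr.dvd_or_dvd hQ' with h | h
    · exfalso
      apply hpr.not_isUnit
      exact isUnit_of_dvd_unit h ((isUnit_iff_ne_zero.2 two).map C)
    rcases hpr.dvd_or_dvd h with h | h
    · rw [dvd_pderiv_eq_zero f hf _ (dlt i) h, map_zero]
    rcases hpr.dvd_or_dvd h with h | h
    · exact absurd h nfz
    · refine dvd_pderiv_eq_zero f hf _ ?_ h
      have := totalDegree_pderiv_le 0 (pderiv i f)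
      have := dlt i
      omega
  obtain ⟨e, a, b, c, d, he, hev⟩ := normal_form f d0 d1 d2 (mixed 1 d1 Q1) (mixed 2 d2 Q2) fz
  refine ⟨-a / e, -b / e, -c / e, -d / e, ?_, ?_⟩
  · rintro ⟨x, s, t⟩ hl
    have q0 := hl 0
    have q1 := hl 1
    rw [hev] at q0 q1
    simp only at q0 q1 ⊢
    constructor
    · field_simp; linear_combination q1 - q0
    · field_simp; linear_combination q0
  · rintro ⟨x, s, t⟩ hl
    have q0 := hl 0
    have q1 := hl 1
    rw [hev] at q0 q1
    simp only at q0 q1 ⊢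
    constructor
    · field_simp; linear_combination q1 - q0
    · field_simp; linear_combination q0

end swp
end LI
set_option linter.unusedSectionVars false

namespace LI
open MvPolynomial

section fac
variable {K : Type*} [Field K]

/-- incidence between a line of type 1 and a line of type 2 -/
def Inc (l m : K × K × K) : Prop := l.2.1 * m.1 + l.2.2 = m.2.1 * l.1 + m.2.2

open Classical in
/-- number of incidences -/
noncomputable def inc (L1 L2 : Finset (K × K × K)) : ℕ :=
  ∑ l ∈ L1, ∑ m ∈ L2, if Inc l m then 1 else 0

lemma inc_swap (L1 L2 : Finset (K × K × K)) : inc L1 L2 = inc L2 L1 := by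
  classical
  unfold inc
  rw [Finset.sum_comm]
  refine Finset.sum_congr rfl fun m _ => Finset.sum_congr rfl fun l _ => ?_
  congr 1
  unfold Inc
  rw [eq_iff_iff]
  exact ⟨fun h => h.symm, fun h => h.symm⟩

lemma inc_le_mul (L1 L2 : Finset (K × K × K)) : inc L1 L2 ≤ L1.card * L2.card := by
  unfold inc
  calc _ ≤ ∑ l ∈ L1, ∑ m ∈ L2, 1 := by gcongr; split_ifs <;> simp
    _ = _ := by simp

lemma inc_mono {L1 L1' L2 L2' : Finset (K × K × K)} (h1 : L1 ⊆ L1') (h2 : L2 ⊆ L2') :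
    inc L1 L2 ≤ inc L1' L2' := by
  classical
  unfold inc
  calc _ ≤ ∑ l ∈ L1, ∑ m ∈ L2', (if Inc l m then 1 else 0) := by
        apply Finset.sum_le_sum
        intro l _
        exact Finset.sum_le_sum_of_subset h2
    _ ≤ _ := Finset.sum_le_sum_of_subset h1

lemma inc_filter_left (L1 L2 : Finset (K × K × K)) (P : K × K × K → Prop) [DecidablePred P] :
    inc L1 L2 = inc (L1.filter P) L2 + inc (L1.filter (fun l => ¬ P l)) L2 := by
  unfold inc
  rw [Finset.sum_filter_add_sum_filter_not]

lemma inc_filter_right (L1 L2 : Finset (K × K × K)) (P : K × K × K → Prop) [DecidablePred P] :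
    inc L1 L2 = inc L1 (L2.filter P) + inc L1 (L2.filter (fun l => ¬ P l)) := by
  rw [inc_swap, inc_filter_left L2 L1 P, inc_swap L1, inc_swap L1]

lemma inc_union_left [DecidableEq K] {L1 L1' L2 : Finset (K × K × K)} (h : Disjoint L1 L1') :
    inc (L1 ∪ L1') L2 = inc L1 L2 + inc L1' L2 := by
  unfold inc
  rw [Finset.sum_union h]

lemma inc_union_right [DecidableEq K] {L1 L1' L2 : Finset (K × K × K)} (h : Disjoint L1 L1') :
    inc L2 (L1 ∪ L1') = inc L2 L1 + inc L2 L1' := by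
  rw [inc_swap, inc_union_left h, inc_swap L2, inc_swap L2]

variable [Infinite K]

lemma inc_off1 (f : MvPolynomial (Fin 3) K) (L1 L2 : Finset (K × K × K))
    (i2 : Set.InjOn Prod.fst (L2 : Set (K × K × K)))
    (h1 : ∀ l ∈ L1, ¬ On1 f l) (h2 : ∀ m ∈ L2, On2 f m) : inc L1 L2 ≤ f.totalDegree * L1.card := by
  classical
  unfold inc
  calc _ ≤ ∑ l ∈ L1, f.totalDegree := by
        apply Finset.sum_le_sum
        intro l hl
        by_contra hc
        apply h1 l hl
        rw [← Finset.sum_filter, ← Finset.card_eq_sum_ones, not_le] at hc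
        refine on1_of_card l f ((L2.filter (Inc l)).image Prod.fst) ?_ ?_
        · intro y hy
          obtain ⟨m, hm, rfl⟩ := Finset.mem_image.1 hy
          rw [Finset.mem_filter] at hm
          have := hm.2
          unfold Inc at this
          rw [this]; exact h2 m hm.1 l.1
        · rwa [Finset.card_image_of_injOn]
          intro x hx y hy hxy
          exact i2 (Finset.mem_filter.1 hx).1 (Finset.mem_filter.1 hy).1 hxy
    _ = _ := by simp [mul_comm]

lemma inc_off2 (f : MvPolynomial (Fin 3) K) (L1 L2 : Finset (K × K × K))
    (i1 : Set.InjOn Prod.fst (L1 : Set (K × K × K)))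
    (h1 : ∀ l ∈ L1, On1 f l) (h2 : ∀ m ∈ L2, ¬ On2 f m) : inc L1 L2 ≤ f.totalDegree * L2.card := by
  rw [inc_swap, ← totalDegree_sw f]
  refine inc_off1 (sw f) L2 L1 i1 ?_ ?_
  · intro l hl; rw [on1_sw]; exact h2 l hl
  · intro l hl; rw [on2_sw]; exact h1 l hl

lemma on1_mul {f g : MvPolynomial (Fin 3) K} {l} (h : On1 (f * g) l) (hf : ¬ On1 f l) : On1 g l := by
  rw [on1_iff] at *
  rw [map_mul] at h
  exact (mul_eq_zero.1 h).resolve_left hf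

lemma on2_mul {f g : MvPolynomial (Fin 3) K} {l} (h : On2 (f * g) l) (hf : ¬ On2 f l) : On2 g l := by
  rw [← on1_sw] at *
  rw [map_mul] at h
  exact on1_mul h hf

open Classical in
/-- every regulus contains at most `M` lines of each family -/
def Reg (L1 L2 : Finset (K × K × K)) (M : ℝ) : Prop :=
  ∀ α β γ δ : K, ((L1.filter (fun l => l.2.1 = α * l.1 + γ ∧ l.2.2 = β * l.1 + δ)).card : ℝ) ≤ M ∧
    ((L2.filter (fun l => l.2.1 = α * l.1 + β ∧ l.2.2 = γ * l.1 + δ)).card : ℝ) ≤ M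

lemma Reg.mono {L1 L1' L2 L2' : Finset (K × K × K)} {M : ℝ} (h : Reg L1' L2' M) (h1 : L1 ⊆ L1') (h2 : L2 ⊆ L2') :
    Reg L1 L2 M := by
  classical
  intro α β γ δ
  obtain ⟨a, b⟩ := h α β γ δ
  constructor
  · refine le_trans ?_ a
    exact_mod_cast Finset.card_le_card (Finset.filter_subset_filter _ h1)
  · refine le_trans ?_ b
    exact_mod_cast Finset.card_le_card (Finset.filter_subset_filter _ h2)

lemma Reg.swap {L1 L2 : Finset (K × K × K)} {M : ℝ} (h : Reg L1 L2 M) : Reg L2 L1 M := by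
  intro α β γ δ
  obtain ⟨a, b⟩ := h α γ β δ
  exact ⟨b, a⟩

lemma sqrt_cs (a b c d : ℝ) (ha : 0 ≤ a) (hb : 0 ≤ b) (hc : 0 ≤ c) (hd : 0 ≤ d) :
    √(a * b) + √(c * d) ≤ √((a + c) * (b + d)) := by
  apply Real.le_sqrt_of_sq_le
  have h1 := Real.sq_sqrt (mul_nonneg ha hb)
  have h2 := Real.sq_sqrt (mul_nonneg hc hd)
  have h3 : 2 * (√(a * b) * √(c * d)) ≤ a * d + c * b := by
    rw [← Real.sqrt_mul (mul_nonneg ha hb), show a * b * (c * d) = (a * d) * (c * b) by ring, Real.sqrt_mul (mul_nonneg ha hd)]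
    have := sq_nonneg (√(a * d) - √(c * b))
    have h4 := Real.sq_sqrt (mul_nonneg ha hd)
    have h5 := Real.sq_sqrt (mul_nonneg hc hb)
    nlinarith
  nlinarith

theorem factor_bound (two : (2 : K) ≠ 0) (M : ℝ) (hM : 0 ≤ M) (f : MvPolynomial (Fin 3) K) : f ≠ 0 →
    (∀ k : ℕ, 0 < k → k ≤ f.totalDegree → (k : K) ≠ 0) →
    ∀ (L1 L2 : Finset (K × K × K)), Set.InjOn Prod.fst (L1 : Set (K × K × K)) →
    Set.InjOn Prod.fst (L2 : Set (K × K × K)) → (∀ l ∈ L1, On1 f l) → (∀ l ∈ L2, On2 f l) →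
    Reg L1 L2 M → ∃ L1' L2' : Finset (K × K × K), L1' ⊆ L1 ∧ L2' ⊆ L2 ∧
      L1'.card ≤ 16 * f.totalDegree ^ 2 ∧ L2'.card ≤ 16 * f.totalDegree ^ 2 ∧
      (inc L1 L2 : ℝ) ≤ f.totalDegree * (L1.card + L2.card) + inc L1' L2 + inc L1 L2'
        + M * √(L1.card * L2.card) := by
  classical
  induction f using UniqueFactorizationMonoid.induction_on_prime with
  | h₁ => intro h; exact absurd rfl h
  | h₂ u hu =>
    intro _ _ L1 L2 i1 i2 h1 h2 hR
    have e1 : L1 = ∅ := by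
      rw [Finset.eq_empty_iff_forall_notMem]
      intro l hl
      have := h1 l hl 0
      exact (hu.map (eval _)).ne_zero this
    subst e1
    refine ⟨∅, ∅, by simp, by simp, by simp, by simp, ?_⟩
    have : inc (∅ : Finset (K × K × K)) L2 = 0 := by simp [inc]
    rw [this]; simp
    positivity
  | h₃ g f hg0 hf ih =>
    intro hfg hchar L1 L2 i1 i2 h1 h2 hR
    have hD := totalDegree_mul_of_isDomain hf.ne_zero hg0
    set L1a := L1.filter (fun l => On1 f l) with hL1a
    set L1b := L1.filter (fun l => ¬ On1 f l) with hL1b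
    set L2a := L2.filter (fun l => On2 f l) with hL2a
    set L2b := L2.filter (fun l => ¬ On2 f l) with hL2b
    have s1a : L1a ⊆ L1 := Finset.filter_subset _ _
    have s1b : L1b ⊆ L1 := Finset.filter_subset _ _
    have s2a : L2a ⊆ L2 := Finset.filter_subset _ _
    have s2b : L2b ⊆ L2 := Finset.filter_subset _ _
    obtain ⟨B1, B2, b1, b2, cb1, cb2, hB⟩ := ih hg0 (fun k hk hk' => hchar k hk (by omega)) L1b L2b
      (i1.mono (by exact_mod_cast s1b)) (i2.mono (by exact_mod_cast s2b))
      (fun l hl => on1_mul (h1 l (s1b hl)) (Finset.mem_filter.1 hl).2)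
      (fun l hl => on2_mul (h2 l (s2b hl)) (Finset.mem_filter.1 hl).2)
      (hR.mono s1b s2b)
    have n1 : L1.card = L1a.card + L1b.card := (Finset.card_filter_add_card_filter_not _).symm
    have n2 : L2.card = L2a.card + L2b.card := (Finset.card_filter_add_card_filter_not _).symm
    have split : inc L1 L2 = inc L1a L2a + inc L1b L2a + (inc L1a L2b + inc L1b L2b) := by
      rw [inc_filter_right L1 L2 (fun l => On2 f l), inc_filter_left L1 _ (fun l => On1 f l),
        inc_filter_left L1 (L2.filter (fun l => ¬ On2 f l)) (fun l => On1 f l)]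
    have o1 : inc L1b L2a ≤ f.totalDegree * L1b.card := inc_off1 f L1b L2a
      (i2.mono (by exact_mod_cast s2a)) (fun l hl => (Finset.mem_filter.1 hl).2) (fun l hl => (Finset.mem_filter.1 hl).2)
    have o2 : inc L1a L2b ≤ f.totalDegree * L2b.card := inc_off2 f L1a L2b
      (i1.mono (by exact_mod_cast s1a)) (fun l hl => (Finset.mem_filter.1 hl).2) (fun l hl => (Finset.mem_filter.1 hl).2)
    have hsq : 16 * f.totalDegree ^ 2 + 16 * g.totalDegree ^ 2 ≤ 16 * (f * g).totalDegree ^ 2 := by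
      rw [hD]; nlinarith [Nat.zero_le (f.totalDegree * g.totalDegree)]
    have hcs := sqrt_cs L1a.card L2a.card L1b.card L2b.card (by positivity) (by positivity) (by positivity) (by positivity)
    have hmain : (inc L1 L2 : ℝ) ≤ inc L1a L2a + (f * g).totalDegree * (L1.card + L2.card) + inc B1 L2b + inc L1b B2
        + M * √(L1b.card * L2b.card) := by
      rw [split]
      have o1' : (inc L1b L2a : ℝ) ≤ f.totalDegree * L1b.card := by exact_mod_cast o1
      have o2' : (inc L1a L2b : ℝ) ≤ f.totalDegree * L2b.card := by exact_mod_cast o2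
      have e1 : (0 : ℝ) ≤ (f * g).totalDegree * L1a.card := by positivity
      have e2 : (0 : ℝ) ≤ (f * g).totalDegree * L2a.card := by positivity
      rw [n1, n2]
      rw [hD] at *
      push_cast at *
      nlinarith
    have hmono : √((L1b.card : ℝ) * L2b.card) ≤ √((L1.card : ℝ) * L2.card) := by
      apply Real.sqrt_le_sqrt
      gcongr
    have hmono' := mul_le_mul_of_nonneg_left hmono hM
    by_cases c1 : L1a.card ≤ 16 * f.totalDegree ^ 2
    · have dj : Disjoint L1a B1 := Disjoint.mono_right b1 (Finset.disjoint_filter_filter_not _ _ _)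
      refine ⟨L1a ∪ B1, B2, Finset.union_subset s1a (b1.trans s1b), b2.trans s2b, ?_, by omega, ?_⟩
      · rw [Finset.card_union_of_disjoint dj]; omega
      · have e1 : inc L1a L2a + inc B1 L2b ≤ inc (L1a ∪ B1) L2 := by
          rw [inc_union_left dj]
          exact add_le_add (inc_mono le_rfl s2a) (inc_mono le_rfl s2b)
        have e2 : inc L1b B2 ≤ inc L1 B2 := inc_mono s1b le_rfl
        have e1' : (inc L1a L2a + inc B1 L2b : ℝ) ≤ inc (L1a ∪ B1) L2 := by exact_mod_cast e1
        have e2' : (inc L1b B2 : ℝ) ≤ inc L1 B2 := by exact_mod_cast e2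
        linarith
    by_cases c2 : L2a.card ≤ 16 * f.totalDegree ^ 2
    · have dj : Disjoint L2a B2 := Disjoint.mono_right b2 (Finset.disjoint_filter_filter_not _ _ _)
      refine ⟨B1, L2a ∪ B2, b1.trans s1b, Finset.union_subset s2a (b2.trans s2b), by omega, ?_, ?_⟩
      · rw [Finset.card_union_of_disjoint dj]; omega
      · have e1 : inc L1a L2a + inc L1b B2 ≤ inc L1 (L2a ∪ B2) := by
          rw [inc_union_right dj]
          exact add_le_add (inc_mono s1a le_rfl) (inc_mono s1b le_rfl)
        have e2 : inc B1 L2b ≤ inc B1 L2 := inc_mono le_rfl s2b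
        have e1' : (inc L1a L2a + inc L1b B2 : ℝ) ≤ inc L1 (L2a ∪ B2) := by exact_mod_cast e1
        have e2' : (inc B1 L2b : ℝ) ≤ inc B1 L2 := by exact_mod_cast e2
        linarith
    · push Not at c1 c2
      obtain ⟨α, β, γ, δ, q1, q2⟩ := classify f hf.irreducible two (fun k hk hk' => hchar k hk (by omega)) L1a L2a
        (i1.mono (by exact_mod_cast s1a)) (i2.mono (by exact_mod_cast s2a))
        (fun l hl => (Finset.mem_filter.1 hl).2) (fun l hl => (Finset.mem_filter.1 hl).2) c1 c2
      obtain ⟨r1, r2⟩ := hR α β γ δ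
      have m1 : (L1a.card : ℝ) ≤ M := by
        refine le_trans ?_ r1
        norm_cast
        apply Finset.card_le_card
        intro l hl
        rw [Finset.mem_filter]
        exact ⟨s1a hl, q1 l (Finset.mem_filter.1 hl).2⟩
      have m2 : (L2a.card : ℝ) ≤ M := by
        refine le_trans ?_ r2
        norm_cast
        apply Finset.card_le_card
        intro l hl
        rw [Finset.mem_filter]
        exact ⟨s2a hl, q2 l (Finset.mem_filter.1 hl).2⟩
      have m3 : (inc L1a L2a : ℝ) ≤ M * √(L1a.card * L2a.card) := by
        have t1 : (inc L1a L2a : ℝ) ≤ L1a.card * L2a.card := by exact_mod_cast inc_le_mul _ _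
        have t2 : √((L1a.card : ℝ) * L2a.card) ≤ M := by
          rw [Real.sqrt_le_left hM]
          nlinarith [Nat.cast_nonneg (α := ℝ) L1a.card, Nat.cast_nonneg (α := ℝ) L2a.card]
        have t3 := Real.mul_self_sqrt (show (0 : ℝ) ≤ L1a.card * L2a.card by positivity)
        nlinarith [Real.sqrt_nonneg ((L1a.card : ℝ) * L2a.card)]
      refine ⟨B1, B2, b1.trans s1b, b2.trans s2b, by omega, by omega, ?_⟩
      have e2 : inc L1b B2 ≤ inc L1 B2 := inc_mono s1b le_rfl
      have e3 : inc B1 L2b ≤ inc B1 L2 := inc_mono le_rfl s2b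
      have e2' : (inc L1b B2 : ℝ) ≤ inc L1 B2 := by exact_mod_cast e2
      have e3' : (inc B1 L2b : ℝ) ≤ inc B1 L2 := by exact_mod_cast e3
      have e4 : M * √(L1a.card * L2a.card) + M * √(L1b.card * L2b.card) ≤ M * √(L1.card * L2.card) := by
        rw [← mul_add]
        apply mul_le_mul_of_nonneg_left _ hM
        rw [n1, n2]; push_cast; exact hcs
      linarith

end fac
end LI
set_option linter.unusedSectionVars false

namespace LI
open MvPolynomial

section samp

/-- centred indicator of colour zero -/
noncomputable def Yc (k : ℕ) (c : Fin (k + 1)) : ℝ := (if c = 0 then ((k : ℝ) + 1) else 0) - 1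

lemma Yc_sum (k : ℕ) : ∑ c, Yc k c = 0 := by
  simp [Yc]

lemma Yc_sq_sum (k : ℕ) : ∑ c, Yc k c ^ 2 ≤ ((k : ℝ) + 1) * ((k : ℝ) + 1) := by
  have : ∀ c, Yc k c ^ 2 = (if c = 0 then ((k : ℝ) + 1) ^ 2 - 2 * (k + 1) else 0) + 1 := by
    intro c; unfold Yc; split_ifs <;> ring
  rw [Finset.sum_congr rfl (fun c _ => this c), Finset.sum_add_distrib]
  simp
  nlinarith

variable {α : Type*} [Fintype α] [DecidableEq α]

lemma sum_YY (k : ℕ) (l l' : α) (h : l ≠ l') :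
    ∑ φ : α → Fin (k + 1), Yc k (φ l) * Yc k (φ l') = 0 := by
  have h1 : ∀ φ : α → Fin (k + 1), Yc k (φ l) * Yc k (φ l') =
      ∏ i, ((if i = l then Yc k (φ i) else 1) * (if i = l' then Yc k (φ i) else 1)) := by
    intro φ
    rw [Finset.prod_mul_distrib, Finset.prod_ite_eq' Finset.univ l, Finset.prod_ite_eq' Finset.univ l']
    simp
  rw [Finset.sum_congr rfl (fun φ _ => h1 φ)]
  rw [← Fintype.prod_sum (fun (i : α) (c : Fin (k+1)) => ((if i = l then Yc k c else 1) * (if i = l' then Yc k c else 1)))]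
  apply Finset.prod_eq_zero (Finset.mem_univ l)
  simp [h, Yc_sum]

lemma sum_Ysq (k : ℕ) (l : α) :
    ∑ φ : α → Fin (k + 1), Yc k (φ l) ^ 2 ≤ ((k : ℝ) + 1) ^ (Fintype.card α) * (k + 1) := by
  have h1 : ∀ φ : α → Fin (k + 1), Yc k (φ l) ^ 2 = ∏ i, (if i = l then Yc k (φ i) ^ 2 else 1) := by
    intro φ
    rw [Finset.prod_ite_eq' Finset.univ l]; simp
  rw [Finset.sum_congr rfl (fun φ _ => h1 φ)]
  rw [← Fintype.prod_sum (fun (i : α) (c : Fin (k+1)) => (if i = l then Yc k c ^ 2 else 1))]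
  calc _ ≤ ∏ i : α, (((k : ℝ) + 1) * (if i = l then (k + 1 : ℝ) else 1)) := by
        apply Finset.prod_le_prod
        · intro i _; apply Finset.sum_nonneg; intro c _; split_ifs <;> positivity
        · intro i _
          by_cases hi : i = l
          · simp only [hi, if_true]; exact Yc_sq_sum k
          · simp [hi]
    _ = _ := by
        rw [Finset.prod_mul_distrib, Finset.prod_ite_eq' Finset.univ l]; simp

lemma sum_card (k : ℕ) :
    ∑ φ : α → Fin (k + 1), ((k : ℝ) + 1) * ((Finset.univ.filter (fun l => φ l = 0)).card : ℝ)
      = ((k : ℝ) + 1) ^ (Fintype.card α) * Fintype.card α := by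
  have h0 : ∀ l : α, ∑ φ : α → Fin (k + 1), Yc k (φ l) = 0 := by
    intro l
    have h1 : ∀ φ : α → Fin (k + 1), Yc k (φ l) = ∏ i, (if i = l then Yc k (φ i) else 1) := by
      intro φ
      rw [Finset.prod_ite_eq' Finset.univ l]; simp
    rw [Finset.sum_congr rfl (fun φ _ => h1 φ)]
    rw [← Fintype.prod_sum (fun (i : α) (c : Fin (k+1)) => (if i = l then Yc k c else 1))]
    apply Finset.prod_eq_zero (Finset.mem_univ l)
    simp [Yc_sum]
  have h2 : ∀ φ : α → Fin (k + 1), ((k : ℝ) + 1) * ((Finset.univ.filter (fun l => φ l = 0)).card : ℝ)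
      = ∑ l, Yc k (φ l) + Fintype.card α := by
    intro φ
    simp only [Yc, Finset.sum_sub_distrib, ← Finset.sum_filter]
    simp; ring
  rw [Finset.sum_congr rfl (fun φ _ => h2 φ), Finset.sum_add_distrib, Finset.sum_comm]
  simp [h0]

lemma sampling_fin {β : Type*} (k : ℕ) (L2 : Finset β) (d : β → Finset α)
    (h1 : 0 < Fintype.card α) (h2 : 0 < L2.card) :
    ∃ S : Finset α, ((k : ℝ) + 1) * S.card ≤ 2 * Fintype.card α ∧
      ∑ m ∈ L2, (((k : ℝ) + 1) * ((d m).filter (· ∈ S)).card - (d m).card) ^ 2 / ((d m).card : ℝ) ≤ 2 * ((k : ℝ) + 1) * L2.card := by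
  set N : ℝ := ((k : ℝ) + 1) ^ (Fintype.card α) with hN
  have hV : ∀ m, ∑ φ : α → Fin (k + 1), (∑ l ∈ d m, Yc k (φ l)) ^ 2 / ((d m).card : ℝ) ≤ N * (k + 1) := by
    intro m
    rw [← Finset.sum_div]
    apply div_le_of_le_mul₀ (by positivity) (by positivity)
    have : ∀ φ : α → Fin (k + 1), (∑ l ∈ d m, Yc k (φ l)) ^ 2 = ∑ l ∈ d m, ∑ l' ∈ d m, Yc k (φ l) * Yc k (φ l') := by
      intro φ; rw [sq, Finset.sum_mul_sum]
    rw [Finset.sum_congr rfl (fun φ _ => this φ), Finset.sum_comm]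
    calc _ ≤ ∑ l ∈ d m, N * (k + 1) := by
          apply Finset.sum_le_sum
          intro l hl
          rw [Finset.sum_comm, Finset.sum_eq_single_of_mem l hl]
          · have := sum_Ysq k l
            simpa [sq] using this
          · intro l' _ hne
            exact sum_YY k l l' hne.symm
      _ = _ := by simp; ring
  have hYc : ∀ (φ : α → Fin (k+1)) (m : β), ∑ l ∈ d m, Yc k (φ l) =
      ((k : ℝ) + 1) * ((d m).filter (· ∈ Finset.univ.filter (fun l => φ l = 0))).card - (d m).card := by
    intro φ m
    simp only [Yc, Finset.sum_sub_distrib, ← Finset.sum_filter]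
    simp; ring
  have hN0 : 0 < N := by positivity
  have c1 : (0 : ℝ) < Fintype.card α := by exact_mod_cast h1
  have c2 : (0 : ℝ) < L2.card := by exact_mod_cast h2
  clear_value N
  have : ∑ φ : α → Fin (k + 1), (((k : ℝ) + 1) * ((Finset.univ.filter (fun l => φ l = 0)).card : ℝ) / Fintype.card α
      + (∑ m ∈ L2, (∑ l ∈ d m, Yc k (φ l)) ^ 2 / ((d m).card : ℝ)) / ((k + 1) * L2.card)) ≤ ∑ φ : α → Fin (k + 1), (2 : ℝ) := by
    rw [Finset.sum_add_distrib, ← Finset.sum_div, ← Finset.sum_div, sum_card, Finset.sum_comm]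
    have e1 : ∑ m ∈ L2, ∑ φ : α → Fin (k + 1), (∑ l ∈ d m, Yc k (φ l)) ^ 2 / ((d m).card : ℝ) ≤ N * ((k + 1) * L2.card) := by
      calc _ ≤ ∑ m ∈ L2, N * (k + 1) := Finset.sum_le_sum (fun m _ => hV m)
        _ = _ := by simp; ring
    have e2 := div_le_of_le_mul₀ (by positivity) (by positivity) e1
    have e3 : N * (Fintype.card α) / (Fintype.card α) = N := by field_simp
    rw [← hN, e3]
    have e4 : ∑ φ : α → Fin (k + 1), (2 : ℝ) = 2 * N := by
      rw [Finset.sum_const, Finset.card_univ, Fintype.card_fun, Fintype.card_fin, nsmul_eq_mul, hN]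
      push_cast; ring
    rw [e4]
    linarith
  obtain ⟨φ, _, hφ⟩ := Finset.exists_le_of_sum_le (Finset.univ_nonempty) this
  simp only [hYc] at hφ
  generalize Finset.univ.filter (fun l => φ l = 0) = S at hφ
  have q1 : (0 : ℝ) ≤ (∑ m ∈ L2, (((k : ℝ) + 1) * ((d m).filter (· ∈ S)).card - (d m).card) ^ 2 / ((d m).card : ℝ))
      / ((k + 1) * L2.card) :=
    div_nonneg (Finset.sum_nonneg fun m _ => div_nonneg (sq_nonneg _) (Nat.cast_nonneg _)) (by positivity)
  have q2 : (0 : ℝ) ≤ ((k : ℝ) + 1) * (S.card : ℝ) / Fintype.card α := by positivity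
  refine ⟨S, ?_, ?_⟩
  · have q3 := (le_add_of_nonneg_right q1).trans hφ
    rwa [div_le_iff₀ c1] at q3
  · have q3 := (le_add_of_nonneg_left q2).trans hφ
    rw [div_le_iff₀ (by positivity)] at q3
    rw [mul_assoc]
    exact q3

end samp

lemma sampling {α β : Type*} [DecidableEq α] (k : ℕ) (L1 : Finset α) (L2 : Finset β) (R : α → β → Prop)
    [∀ l m, Decidable (R l m)] (h1 : 0 < L1.card) (h2 : 0 < L2.card) :
    ∃ S ⊆ L1, ((k : ℝ) + 1) * S.card ≤ 2 * L1.card ∧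
      ∑ m ∈ L2, (((k : ℝ) + 1) * (S.filter (fun l => R l m)).card - (L1.filter (fun l => R l m)).card) ^ 2
        / ((L1.filter (fun l => R l m)).card : ℝ) ≤ 2 * ((k : ℝ) + 1) * L2.card := by
  obtain ⟨S, hS1, hS2⟩ := sampling_fin (α := L1) k L2 (fun m => Finset.univ.filter (fun l => R l.1 m)) (by simpa using h1) h2
  have e1 : ∀ m, (L1.filter (fun l => R l m)).card = (Finset.univ.filter (fun l : L1 => R l.1 m)).card := by
    intro m
    rw [← Finset.card_map (Function.Embedding.subtype (· ∈ L1))]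
    congr 1
    ext l; simp [and_comm]
  have e2 : ∀ m, ((S.map (Function.Embedding.subtype (· ∈ L1))).filter (fun l => R l m)).card =
      ((Finset.univ.filter (fun l : L1 => R l.1 m)).filter (· ∈ S)).card := by
    intro m
    rw [← Finset.card_map (Function.Embedding.subtype (· ∈ L1))]
    congr 1
    ext l; simp; grind
  refine ⟨S.map (Function.Embedding.subtype (· ∈ L1)), ?_, ?_, ?_⟩
  · intro l hl
    simp at hl
    exact hl.1
  · simpa using hS1
  · simpa only [e1, e2] using hS2

section ex
variable {K : Type*} [Field K] [Infinite K]

lemma exists_poly (S : Finset (K × K × K)) (w : ℕ) (h : 3 * S.card ≤ w ^ 2) :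
    ∃ f : MvPolynomial (Fin 3) K, f ≠ 0 ∧ f.totalDegree ≤ 3 * w ∧ ∀ l ∈ S, On1 f l := by
  classical
  obtain ⟨Y, hY⟩ := Infinite.exists_subset_card_eq K (3 * w + 1)
  set mon : (Fin 3 → Fin (w + 1)) → (Fin 3 →₀ ℕ) := fun t => Finsupp.equivFunOnFinite.symm (fun i => (t i : ℕ)) with hmon
  have hinj : Function.Injective mon := by
    intro t t' h
    have := Finsupp.equivFunOnFinite.symm.injective h
    ext i
    exact congrFun this i
  set P : ((Fin 3 → Fin (w + 1)) → K) →ₗ[K] MvPolynomial (Fin 3) K :=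
    ∑ t, (MvPolynomial.monomial (mon t)).comp (LinearMap.proj t) with hP
  set E : ((Fin 3 → Fin (w + 1)) → K) →ₗ[K] ((S × Y) → K) :=
    LinearMap.pi (fun q => (MvPolynomial.aeval (R := K) ![q.1.1.2.1 * q.2.1 + q.1.1.2.2, q.1.1.1, q.2.1]).toLinearMap.comp P) with hE
  have hker : LinearMap.ker E ≠ ⊥ := by
    apply LinearMap.ker_ne_bot_of_finrank_lt
    simp only [Module.finrank_fintype_fun_eq_card, Fintype.card_prod, Fintype.card_coe, hY, Fintype.card_fun, Fintype.card_fin]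
    nlinarith
  obtain ⟨c, hc, hc0⟩ := (Submodule.ne_bot_iff _).1 hker
  have hPc : P c = ∑ t, MvPolynomial.monomial (mon t) (c t) := by simp [hP]
  have hdeg : (P c).totalDegree ≤ 3 * w := by
    rw [hPc]
    refine totalDegree_finsetSum_le (fun t _ => ?_)
    refine (totalDegree_monomial_le _ _).trans ?_
    rw [Finsupp.sum_fintype _ _ (by simp), Fin.sum_univ_three]
    simp [hmon]
    have := (t 0).2; have := (t 1).2; have := (t 2).2
    omega
  refine ⟨P c, ?_, hdeg, ?_⟩
  · intro h0
    apply hc0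
    ext t
    have := congrArg (coeff (mon t)) h0
    rw [hPc, coeff_sum] at this
    simp only [coeff_monomial, coeff_zero] at this
    rw [Finset.sum_eq_single_of_mem t (Finset.mem_univ t)] at this
    · simpa using this
    · intro t' _ hne
      rw [if_neg (fun h => hne (hinj h))]
  · intro l hl
    refine on1_of_card l _ Y ?_ (by omega)
    intro y hy
    have := congrFun (LinearMap.mem_ker.1 hc) (⟨l, hl⟩, ⟨y, hy⟩)
    simpa [hE, aeval_eq_eval] using this

end ex
end LI
set_option linter.unusedSectionVars false

namespace LI
open MvPolynomial

section main
variable {K : Type*} [Field K] [Infinite K]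

lemma prod_aux {x y x' y' a b M : ℝ} (hx : 0 ≤ x) (hy : 0 ≤ y) (hM : 0 ≤ M) (hxx : x ≤ x') (hyy : y ≤ y')
    (hxa : x ≤ a) (hyb : y ≤ b) : x * y * (x + y + M) ≤ x' * y' * (a + b + M) := by
  have : 0 ≤ x' := hx.trans hxx
  have : 0 ≤ y' := hy.trans hyy
  have : 0 ≤ a := hx.trans hxa
  have : 0 ≤ b := hy.trans hyb
  gcongr

set_option maxHeartbeats 1000000 in
lemma inc_step (p : ℕ) (hp : ∀ k : ℕ, 0 < k → k < p → (k : K) ≠ 0) (M : ℝ) (hM : 0 ≤ M)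
    (L1 L2 : Finset (K × K × K)) (i1 : Set.InjOn Prod.fst (L1 : Set (K × K × K)))
    (i2 : Set.InjOn Prod.fst (L2 : Set (K × K × K))) (hR : Reg L1 L2 M) (h12 : L1.card ≤ L2.card)
    (hn : L1.card ≤ p ^ 2) (hbig : 65536 ≤ L1.card) :
    ∃ A B A' B' : Finset (K × K × K), A ⊆ L1 ∧ B ⊆ L2 ∧ A' ⊆ A ∧ B' ⊆ B ∧
      64 * A'.card ≤ L1.card ∧ 64 * B'.card ≤ L1.card ∧
      (inc L1 L2 : ℝ) ≤ 10000000 * (√L1.card * √L2.card * (√L1.card + √L2.card + M)) + inc A' B + inc A B' := by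
  classical
  set a := √(L1.card : ℝ) with ha
  set b := √(L2.card : ℝ) with hb
  have ha2 : a ^ 2 = L1.card := Real.sq_sqrt (by positivity)
  have hb2 : b ^ 2 = L2.card := Real.sq_sqrt (by positivity)
  have ha0 : 0 ≤ a := Real.sqrt_nonneg _
  have hb0 : 0 ≤ b := Real.sqrt_nonneg _
  have hab : a ≤ b := Real.sqrt_le_sqrt (by exact_mod_cast h12)
  have ha256 : 256 ≤ a := by
    apply Real.le_sqrt_of_sq_le
    have : (65536 : ℝ) ≤ L1.card := by exact_mod_cast hbig
    linarith
  have hap : a ≤ p := by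
    rw [ha, Real.sqrt_le_left (by positivity)]; exact_mod_cast hn
  set w := ⌈a / 256⌉₊ with hw
  have hw1 : a / 256 ≤ w := Nat.le_ceil _
  have hw2 : (w : ℝ) ≤ a / 128 := by
    have := Nat.ceil_lt_add_one (show 0 ≤ a / 256 by positivity)
    linarith
  obtain ⟨S, hS, hSc, hSv⟩ := sampling 393215 L1 L2 Inc (by omega) (by omega)
  have hr : (((393215 : ℕ) : ℝ) + 1) = 393216 := by norm_num
  rw [hr] at hSc hSv
  have hSw : 3 * S.card ≤ w ^ 2 := by
    have : (3 * S.card : ℝ) ≤ w ^ 2 := by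
      have : (a / 256) ^ 2 ≤ (w : ℝ) ^ 2 := by gcongr
      nlinarith
    exact_mod_cast this
  obtain ⟨f, hf0, hfd, hfS⟩ := exists_poly S w hSw
  have hDa : (f.totalDegree : ℝ) ≤ 3 * (a / 128) := by
    have : (f.totalDegree : ℝ) ≤ 3 * w := by exact_mod_cast hfd
    linarith
  have hDp : f.totalDegree < p := by
    have : (f.totalDegree : ℝ) < p := by linarith
    exact_mod_cast this
  have hp2 : 2 < p := by
    have : (2 : ℝ) < p := by linarith
    exact_mod_cast this
  have two : (2 : K) ≠ 0 := by exact_mod_cast hp 2 (by norm_num) hp2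
  set h : K × K × K → ℕ := fun m => (S.filter (fun l => Inc l m)).card with hh
  set d : K × K × K → ℕ := fun m => (L1.filter (fun l => Inc l m)).card with hd
  set G := L2.filter (fun m => 3 * w < h m) with hG
  set B0 := L2.filter (fun m => ¬ 3 * w < h m) with hB0
  have hGon : ∀ m ∈ G, On2 f m := by
    intro m hm
    have hm2 := (Finset.mem_filter.1 hm).2
    refine on2_of_card m f ((S.filter (fun l => Inc l m)).image Prod.fst) ?_ ?_
    · intro x hx
      obtain ⟨l, hl, rfl⟩ := Finset.mem_image.1 hx
      rw [Finset.mem_filter] at hl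
      have := hl.2
      unfold Inc at this
      rw [← this]; exact hfS l hl.1 m.1
    · rw [Finset.card_image_of_injOn]
      · exact hfd.trans_lt hm2
      · intro x hx y hy hxy
        exact i1 (hS (Finset.mem_filter.1 hx).1) (hS (Finset.mem_filter.1 hy).1) hxy
  have hincd : ∀ T : Finset (K × K × K), inc L1 T = ∑ m ∈ T, d m := by
    intro T
    unfold inc
    rw [Finset.sum_comm]
    refine Finset.sum_congr rfl fun m _ => ?_
    rw [hd]; simp only; rw [Finset.card_filter]
  have hB0le : (inc L1 B0 : ℝ) ≤ (4 * 393216 * (3 * w) + 4 * 393216) * L2.card := by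
    rw [hincd]
    push_cast
    have key : ∀ m ∈ B0, (d m : ℝ) ≤ 4 * 393216 * (3 * w) + 2 * ((393216 * (h m : ℝ) - d m) ^ 2 / (d m : ℝ)) := by
      intro m hm
      have hm2 := (Finset.mem_filter.1 hm).2
      have hm3 : (h m : ℝ) ≤ 3 * w := by
        have : h m ≤ 3 * w := by omega
        exact_mod_cast this
      rcases le_total (d m : ℝ) (4 * 393216 * (3 * w)) with hc | hc
      · have : (0 : ℝ) ≤ 2 * ((393216 * (h m : ℝ) - d m) ^ 2 / (d m : ℝ)) := by positivity
        linarith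
      · rcases eq_or_lt_of_le (Nat.cast_nonneg (α := ℝ) (d m)) with h0 | h0
        · rw [← h0]; simp
        have h1 : (d m : ℝ) / 2 ≤ (393216 * (h m : ℝ) - d m) ^ 2 / (d m : ℝ) := by
          rw [le_div_iff₀ h0]
          have : 393216 * (h m : ℝ) ≤ d m / 4 := by linarith
          nlinarith
        have : (0 : ℝ) ≤ 4 * 393216 * (3 * w) := by positivity
        linarith
    have hB0L : B0 ⊆ L2 := Finset.filter_subset _ _
    calc (∑ m ∈ B0, (d m : ℝ)) ≤ ∑ m ∈ B0, (4 * 393216 * (3 * w) + 2 * ((393216 * (h m : ℝ) - d m) ^ 2 / (d m : ℝ))) :=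
          Finset.sum_le_sum key
      _ ≤ ∑ m ∈ L2, (4 * 393216 * (3 * w) + 2 * ((393216 * (h m : ℝ) - d m) ^ 2 / (d m : ℝ))) := by
          apply Finset.sum_le_sum_of_subset_of_nonneg hB0L
          intro m _ _; positivity
      _ = 4 * 393216 * (3 * w) * L2.card + 2 * ∑ m ∈ L2, ((393216 * (h m : ℝ) - d m) ^ 2 / (d m : ℝ)) := by
          rw [Finset.sum_add_distrib, Finset.mul_sum]; simp; ring
      _ ≤ _ := by
          have := hSv
          simp only [hh, hd]
          linarith
  set A := L1.filter (fun l => On1 f l) with hA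
  set A0 := L1.filter (fun l => ¬ On1 f l) with hA0
  have sA : A ⊆ L1 := Finset.filter_subset _ _
  have sA0 : A0 ⊆ L1 := Finset.filter_subset _ _
  have sG : G ⊆ L2 := Finset.filter_subset _ _
  obtain ⟨A', B', sA', sB', cA', cB', hfac⟩ := factor_bound two M hM f hf0 (fun k hk hk' => hp k hk (by omega)) A G
    (i1.mono (by exact_mod_cast sA)) (i2.mono (by exact_mod_cast sG))
    (fun l hl => (Finset.mem_filter.1 hl).2) hGon (hR.mono sA sG)
  have hoff : inc A0 G ≤ f.totalDegree * A0.card := inc_off1 f A0 G (i2.mono (by exact_mod_cast sG))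
    (fun l hl => (Finset.mem_filter.1 hl).2) hGon
  have hsmall : ∀ x : ℕ, x ≤ 16 * f.totalDegree ^ 2 → 64 * x ≤ L1.card := by
    intro x hx
    have hx' : (x : ℝ) ≤ 16 * f.totalDegree ^ 2 := by exact_mod_cast hx
    have : (f.totalDegree : ℝ) ^ 2 ≤ (3 * (a / 128)) ^ 2 := by gcongr
    have : (64 * x : ℝ) ≤ L1.card := by nlinarith
    exact_mod_cast this
  refine ⟨A, G, A', B', sA, sG, sA', sB', hsmall _ cA', hsmall _ cB', ?_⟩
  have split : inc L1 L2 = inc A G + inc A0 G + inc L1 B0 := by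
    rw [inc_filter_right L1 L2 (fun m => 3 * w < h m), inc_filter_left L1 (L2.filter (fun m => 3 * w < h m)) (fun l => On1 f l)]
  rw [split]
  push_cast
  have hoff' : (inc A0 G : ℝ) ≤ f.totalDegree * L1.card := by
    calc (inc A0 G : ℝ) ≤ f.totalDegree * A0.card := by exact_mod_cast hoff
      _ ≤ _ := by gcongr
  have hAG : (f.totalDegree : ℝ) * (A.card + G.card) ≤ f.totalDegree * (L1.card + L2.card) := by
    gcongr
  have hMs : M * √((A.card : ℝ) * G.card) ≤ M * (a * b) := by
    apply mul_le_mul_of_nonneg_left _ hM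
    rw [ha, hb, ← Real.sqrt_mul (by positivity)]
    apply Real.sqrt_le_sqrt
    gcongr
  have e1 : (f.totalDegree : ℝ) * L1.card ≤ a * b * b := by
    rw [← ha2]
    calc (f.totalDegree : ℝ) * a ^ 2 ≤ b * a ^ 2 := by gcongr; linarith
      _ = a * b * a := by ring
      _ ≤ a * b * b := by gcongr
  have e2 : (f.totalDegree : ℝ) * L2.card ≤ a * b * b := by
    rw [← hb2]
    calc (f.totalDegree : ℝ) * b ^ 2 ≤ a * b ^ 2 := by gcongr; linarith
      _ = a * b * b := by ring
  have e3 : (4 * 393216 * (3 * w) + 4 * 393216) * (L2.card : ℝ) ≤ 8 * 393216 * (a * b * b) := by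
    rw [← hb2]
    calc (4 * 393216 * (3 * w) + 4 * 393216) * b ^ 2 ≤ (8 * 393216 * a) * b ^ 2 := by gcongr; linarith
      _ = _ := by ring
  have e4 : 0 ≤ a * b * a := by positivity
  have e5 : 0 ≤ a * b * b := by positivity
  have e6 : 0 ≤ a * b * M := by positivity
  nlinarith

theorem inc_bound (p : ℕ) (hp : ∀ k : ℕ, 0 < k → k < p → (k : K) ≠ 0) (M : ℝ) (hM : 0 ≤ M) (n : ℕ) :
    ∀ (L1 L2 : Finset (K × K × K)), L1.card + L2.card ≤ n → Set.InjOn Prod.fst (L1 : Set (K × K × K)) →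
    Set.InjOn Prod.fst (L2 : Set (K × K × K)) → Reg L1 L2 M → (L1.card ≤ p ^ 2 ∨ L2.card ≤ p ^ 2) →
    (inc L1 L2 : ℝ) ≤ 20000000 * (√L1.card * √L2.card * (√L1.card + √L2.card + M)) := by
  induction n using Nat.strong_induction_on with
  | _ n ih =>
  have main : ∀ (L1 L2 : Finset (K × K × K)), L1.card + L2.card ≤ n → Set.InjOn Prod.fst (L1 : Set (K × K × K)) →
    Set.InjOn Prod.fst (L2 : Set (K × K × K)) → Reg L1 L2 M → L1.card ≤ p ^ 2 → L1.card ≤ L2.card → 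
    (inc L1 L2 : ℝ) ≤ 20000000 * (√L1.card * √L2.card * (√L1.card + √L2.card + M)) := by
    intro L1 L2 hn i1 i2 hR hmin hle
    have ha2 : √(L1.card : ℝ) ^ 2 = L1.card := Real.sq_sqrt (by positivity)
    have hb2 : √(L2.card : ℝ) ^ 2 = L2.card := Real.sq_sqrt (by positivity)
    have ha0 : 0 ≤ √(L1.card : ℝ) := Real.sqrt_nonneg _
    have hb0 : 0 ≤ √(L2.card : ℝ) := Real.sqrt_nonneg _
    have hab : √(L1.card : ℝ) ≤ √(L2.card : ℝ) := Real.sqrt_le_sqrt (by exact_mod_cast hle)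
    rcases lt_or_ge L1.card 65536 with hs | hbig
    · have h1 : (inc L1 L2 : ℝ) ≤ L1.card * L2.card := by exact_mod_cast inc_le_mul _ _
      have h2 : √(L1.card : ℝ) ≤ 256 := by
        rw [Real.sqrt_le_left (by norm_num)]
        have : (L1.card : ℝ) ≤ 65536 := by exact_mod_cast hs.le
        linarith
      rw [← ha2, ← hb2] at h1
      generalize √(L1.card : ℝ) = a at *
      generalize √(L2.card : ℝ) = b at *
      have h3 : a ^ 2 * b ^ 2 ≤ 256 * (a * b * b) := by
        have : 0 ≤ a * b ^ 2 := by positivity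
        nlinarith
      have e4 : 0 ≤ a * b * a := by positivity
      have e5 : 0 ≤ a * b * b := by positivity
      have e6 : 0 ≤ a * b * M := by positivity
      nlinarith
    · obtain ⟨A, B, A', B', sA, sB, sA', sB', cA, cB, hI⟩ := inc_step p hp M hM L1 L2 i1 i2 hR hle hmin hbig
      have kA := Finset.card_le_card sA
      have kB := Finset.card_le_card sB
      have kA' := Finset.card_le_card sA'
      have kB' := Finset.card_le_card sB'
      have r1 := ih (A'.card + B.card) (by omega) A' B le_rfl
        (i1.mono (by exact_mod_cast sA'.trans sA)) (i2.mono (by exact_mod_cast sB)) (hR.mono (sA'.trans sA) sB) (Or.inl (by omega))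
      have r2 := ih (A.card + B'.card) (by omega) A B' le_rfl
        (i1.mono (by exact_mod_cast sA)) (i2.mono (by exact_mod_cast sB'.trans sB)) (hR.mono sA (sB'.trans sB)) (Or.inl (by omega))
      have sm : ∀ x : ℕ, 64 * x ≤ L1.card → √(x : ℝ) ≤ √(L1.card : ℝ) / 8 := by
        intro x hx
        rw [Real.sqrt_le_left (by positivity)]
        have : (64 * x : ℝ) ≤ L1.card := by exact_mod_cast hx
        rw [div_pow, ha2]; linarith
      have t1 := sm _ cA
      have t2 := sm _ cB
      have t3 : √(B.card : ℝ) ≤ √(L2.card : ℝ) := Real.sqrt_le_sqrt (by exact_mod_cast kB)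
      have t4 : √(A.card : ℝ) ≤ √(L1.card : ℝ) := Real.sqrt_le_sqrt (by exact_mod_cast kA)
      have u1 : √(A'.card : ℝ) * √(B.card : ℝ) * (√(A'.card : ℝ) + √(B.card : ℝ) + M) ≤
          (√(L1.card : ℝ) / 8) * √(L2.card : ℝ) * (√(L1.card : ℝ) + √(L2.card : ℝ) + M) := by
        exact prod_aux (Real.sqrt_nonneg _) (Real.sqrt_nonneg _) hM t1 t3 (by linarith) t3
      have u2 : √(A.card : ℝ) * √(B'.card : ℝ) * (√(A.card : ℝ) + √(B'.card : ℝ) + M) ≤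
          √(L1.card : ℝ) * (√(L2.card : ℝ) / 8) * (√(L1.card : ℝ) + √(L2.card : ℝ) + M) := by
        exact prod_aux (Real.sqrt_nonneg _) (Real.sqrt_nonneg _) hM t4 (by linarith) t4 (by linarith)
      have : 0 ≤ √(L1.card : ℝ) * √(L2.card : ℝ) * (√(L1.card : ℝ) + √(L2.card : ℝ) + M) := by positivity
      linarith
  intro L1 L2 hn i1 i2 hR hmin
  rcases le_total L1.card L2.card with hle | hle
  · exact main L1 L2 hn i1 i2 hR (by omega) hle
  · have := main L2 L1 (by omega) i2 i1 hR.swap (by omega) hle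
    rw [inc_swap]
    calc _ ≤ _ := this
      _ = _ := by ring

end main
end LI
set_option linter.unusedSectionVars false

namespace LI
open MvPolynomial

/-- number of points of `A` mapped into `A` by `g` -/
def ri {F : Type*} [Field F] [DecidableEq F] (A : Finset F) (g : F × F) : ℕ :=
  (A.filter (fun x => g.1 * x + g.2 ∈ A)).card

section coll
variable {F : Type*} [Field F] [DecidableEq F]

lemma ri_le (A : Finset F) (g : F × F) : ri A g ≤ A.card := Finset.card_filter_le _ _

/-- few rich maps on a common line of the parameter plane -/
lemma coll_bound (A : Finset F) (G : Finset (F × F)) (k : ℕ) (hG : ∀ g ∈ G, k ≤ ri A g)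
    (P : F × F) (u v : F) (huv : u ≠ 0 ∨ v ≠ 0)
    (hl : ∀ g ∈ G, (g.1 - P.1) * v = (g.2 - P.2) * u) :
    G.card * (k - 1) ≤ A.card ^ 2 := by
  classical
  -- the exceptional point
  obtain ⟨z, hz⟩ : ∃ z : F, ∀ g ∈ G, ∀ g' ∈ G, ∀ x, x ≠ z →
      g.1 * x + g.2 = g'.1 * x + g'.2 → g = g' := by
    by_cases hu : u = 0
    · subst hu
      have hv : v ≠ 0 := by simpa using huv
      refine ⟨0, fun g hg g' hg' x _ h => ?_⟩
      have h1 : g.1 = P.1 := by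
        have := hl g hg
        simp only [mul_zero, mul_eq_zero, hv, or_false] at this
        exact sub_eq_zero.mp this
      have h2 : g'.1 = P.1 := by
        have := hl g' hg'
        simp only [mul_zero, mul_eq_zero, hv, or_false] at this
        exact sub_eq_zero.mp this
      rw [h1, h2] at h
      exact Prod.ext (h1.trans h2.symm) (add_left_cancel h)
    · refine ⟨-(v / u), fun g hg g' hg' x hx h => ?_⟩
      have h1 := hl g hg
      have h2 := hl g' hg'
      have h3 : (g.1 - g'.1) * (x * u + v) = 0 := by linear_combination h1 - h2 + u * h
      have h4 : x * u + v ≠ 0 := by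
        intro h0
        apply hx
        field_simp
        linear_combination h0
      have h5 : g.1 = g'.1 := by
        rcases mul_eq_zero.mp h3 with h | h
        · exact sub_eq_zero.mp h
        · exact absurd h h4
      rw [h5] at h
      exact Prod.ext h5 (add_left_cancel h)
  have key : ∑ g ∈ G, (k - 1) ≤ ((A ×ˢ A)).card := by
    calc ∑ g ∈ G, (k - 1) ≤ ∑ g ∈ G, ((A.filter (fun x => g.1 * x + g.2 ∈ A)).erase z).card := by
          refine Finset.sum_le_sum fun g hg => ?_
          have h1 := hG g hg
          have h2 := Finset.pred_card_le_card_erase (a := z) (s := A.filter (fun x => g.1 * x + g.2 ∈ A))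
          unfold ri at h1
          omega
      _ = (G.sigma (fun g => (A.filter (fun x => g.1 * x + g.2 ∈ A)).erase z)).card := by
          rw [Finset.card_sigma]
      _ ≤ (A ×ˢ A).card := by
          apply Finset.card_le_card_of_injOn (fun q => (q.2, q.1.1 * q.2 + q.1.2))
          · rintro ⟨g, x⟩ h
            simp at h
            simpa using h.2.1
          · rintro ⟨g, x⟩ h ⟨g', x'⟩ h' he
            simp at h h' he
            obtain ⟨rfl, he⟩ := he
            have := hz g h.1 g' h'.1 x h.2.2 he
            subst this
            rfl
  simpa [sq] using key

end coll

lemma det3 {K : Type*} [Field K] (α α' β β' γ γ' : K) (U V a b e : Fin 3 → K)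
    (ha : ∀ i, a i = α * U i + α' * V i) (hb : ∀ i, b i = β * U i + β' * V i)
    (he : ∀ i, e i = γ * U i + γ' * V i) :
    a 0 * (b 1 * e 2 - b 2 * e 1) - a 1 * (b 0 * e 2 - b 2 * e 0)
      + a 2 * (b 0 * e 1 - b 1 * e 0) = 0 := by
  simp only [ha, hb, he]; ring

/-- collinear triples in `F³` -/
lemma triple_card {F : Type*} [Field F] [DecidableEq F] (A : Finset F) (G : Finset (F × F)) (k : ℕ)
    (hk : 2 ≤ k) (hG : ∀ g ∈ G, k ≤ ri A g) (S : Finset ((F × F) × F)) (hS : S ⊆ G ×ˢ A)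
    (h1 : ∀ w : Fin 3 → (F × F) × F, (∀ i, w i ∈ S) →
      (((w 0).1.1 - (w 2).1.1) * ((w 1).1.2 - (w 2).1.2) = ((w 1).1.1 - (w 2).1.1) * ((w 0).1.2 - (w 2).1.2)) ∧
      (((w 0).1.1 - (w 2).1.1) * ((w 1).2 - (w 2).2) = ((w 1).1.1 - (w 2).1.1) * ((w 0).2 - (w 2).2)) ∧
      (((w 0).1.2 - (w 2).1.2) * ((w 1).2 - (w 2).2) = ((w 1).1.2 - (w 2).1.2) * ((w 0).2 - (w 2).2))) :
    (S.card : ℝ) ≤ A.card + 2 * (A.card : ℝ) ^ 2 / k := by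
  classical
  have hk0 : (0 : ℝ) < k := by positivity
  have hpos : 0 ≤ 2 * (A.card : ℝ) ^ 2 / k := by positivity
  by_cases hc : ∀ u ∈ S, ∀ w ∈ S, u.1 = w.1
  · have : S.card ≤ A.card := by
      apply Finset.card_le_card_of_injOn (fun q => q.2)
      · intro q hq
        exact (Finset.mem_product.mp (hS hq)).2
      · intro q hq q' hq' h
        exact Prod.ext (hc q hq q' hq') h
    have : (S.card : ℝ) ≤ A.card := by exact_mod_cast this
    linarith
  · push Not at hc
    obtain ⟨P, hP, Q, hQ, hPQ⟩ := hc
    have hinj : Set.InjOn (fun q : (F × F) × F => q.1) S := by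
      intro u hu v hv huv
      simp only at huv
      rw [Finset.mem_coe] at hu hv
      refine Prod.ext huv ?_
      obtain ⟨w, hw, hwu⟩ : ∃ w ∈ S, w.1 ≠ u.1 := by
        by_cases h : P.1 = u.1
        · exact ⟨Q, hQ, fun h' => hPQ (h.trans h'.symm)⟩
        · exact ⟨P, hP, h⟩
      have h3 := h1 ![u, v, w] (by intro i; fin_cases i <;> simp [hu, hv, hw])
      simp at h3
      obtain ⟨-, h4, h5⟩ := h3
      rw [← huv] at h4 h5
      by_cases hh : u.1.1 = w.1.1
      · have h6 : u.1.2 - w.1.2 ≠ 0 := fun h => hwu (Prod.ext hh.symm (sub_eq_zero.mp h).symm)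
        have := mul_left_cancel₀ h6 h5
        exact (sub_left_inj.mp this).symm
      · have h6 : u.1.1 - w.1.1 ≠ 0 := sub_ne_zero.mpr hh
        have := mul_left_cancel₀ h6 h4
        exact (sub_left_inj.mp this).symm
    have hb := coll_bound A (S.image (fun q => q.1)) k
      (by
        intro g hg
        obtain ⟨q, hq, rfl⟩ := Finset.mem_image.mp hg
        exact hG _ (Finset.mem_product.mp (hS hq)).1) P.1 (Q.1.1 - P.1.1) (Q.1.2 - P.1.2)
      (by
        by_contra h
        push Not at h
        exact hPQ (Prod.ext (sub_eq_zero.mp h.1).symm (sub_eq_zero.mp h.2).symm))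
      (by
        intro g hg
        obtain ⟨q, hq, rfl⟩ := Finset.mem_image.mp hg
        have h3 := h1 ![q, Q, P] (by intro i; fin_cases i <;> simp [hq, hQ, hP])
        simp at h3
        linear_combination h3.1)
    rw [Finset.card_image_of_injOn hinj] at hb
    have h2 : S.card * k ≤ 2 * A.card ^ 2 := by
      have : S.card * k ≤ S.card * (2 * (k - 1)) := Nat.mul_le_mul_left _ (by omega)
      linarith
    have h3 : (S.card : ℝ) * k ≤ 2 * (A.card : ℝ) ^ 2 := by exact_mod_cast h2
    have h4 : (S.card : ℝ) ≤ 2 * (A.card : ℝ) ^ 2 / k := by rwa [le_div_iff₀ hk0]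
    have : (0 : ℝ) ≤ A.card := by positivity
    linarith

end LI
set_option linter.unusedSectionVars false

namespace LI

section gen
variable {F : Type*} [Field F]
open Polynomial

noncomputable def pU1 (q : (F × F) × F) : F[X] := C q.1.1 * X ^ 1 + C q.1.2 * X ^ 2 - C q.2 * X ^ 0
noncomputable def pU4 (q : (F × F) × F) : F[X] := C q.1.1 * X ^ 4 + C q.1.2 * X ^ 8 - C 1 * X ^ 0
noncomputable def pV2 (q : (F × F) × F) : F[X] := C q.2 * X ^ 0 - C q.1.1 * X ^ 1 - C q.1.2 * X ^ 4
noncomputable def pV3 (q : (F × F) × F) : F[X] := C 1 * X ^ 0 - C q.1.1 * X ^ 2 - C q.1.2 * X ^ 8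

lemma pU4_ne (q : (F × F) × F) : pU4 q ≠ 0 := by
  intro h
  have := congrArg (fun P => P.coeff 0) h
  simp [pU4, coeff_X_pow] at this

lemma pV3_ne (q : (F × F) × F) : pV3 q ≠ 0 := by
  intro h
  have := congrArg (fun P => P.coeff 0) h
  simp [pV3, coeff_X_pow] at this

lemma pU_inj (q r : (F × F) × F) (h : pU1 q * pU4 r = pU1 r * pU4 q) : q = r := by
  obtain ⟨⟨a, b⟩, x⟩ := q
  obtain ⟨⟨a', b'⟩, x'⟩ := r
  have e : ∀ a b x a' b' : F, ∀ y : F, pU1 ((a, b), x) * pU4 ((a', b'), y) = C (a * a') * X ^ 5 + C (a * b') * X ^ 9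
      - C a * X ^ 1 + C (b * a') * X ^ 6 + C (b * b') * X ^ 10 - C b * X ^ 2 - C (x * a') * X ^ 4
      - C (x * b') * X ^ 8 + C x * X ^ 0 := by
    intro a b x a' b' y
    simp only [pU1, pU4, C_mul, C_1]; ring
  rw [e, e] at h
  have h0 := congrArg (fun P => P.coeff 0) h
  have h1 := congrArg (fun P => P.coeff 1) h
  have h2 := congrArg (fun P => P.coeff 2) h
  simp only [coeff_add, coeff_sub, coeff_C_mul, coeff_X_pow] at h0 h1 h2
  norm_num at h0 h1 h2
  simp [h0, h1, h2]

lemma pV_inj (q r : (F × F) × F) (h : pV2 q * pV3 r = pV2 r * pV3 q) : q = r := by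
  obtain ⟨⟨a, b⟩, x⟩ := q
  obtain ⟨⟨a', b'⟩, x'⟩ := r
  have e : ∀ a b x a' b' : F, ∀ y : F, pV2 ((a, b), x) * pV3 ((a', b'), y) = C x * X ^ 0 - C (x * a') * X ^ 2
      - C (x * b') * X ^ 8 - C a * X ^ 1 + C (a * a') * X ^ 3 + C (a * b') * X ^ 9
      - C b * X ^ 4 + C (b * a') * X ^ 6 + C (b * b') * X ^ 12 := by
    intro a b x a' b' y
    simp only [pV2, pV3, C_mul, C_1]; ring
  rw [e, e] at h
  have h0 := congrArg (fun P => P.coeff 0) h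
  have h1 := congrArg (fun P => P.coeff 1) h
  have h2 := congrArg (fun P => P.coeff 4) h
  simp only [coeff_add, coeff_sub, coeff_C_mul, coeff_X_pow] at h0 h1 h2
  norm_num at h0 h1 h2
  simp [h0, h1, h2]

noncomputable def ph : F[X] →+* RatFunc F := algebraMap F[X] (RatFunc F)

lemma ph_inj : Function.Injective (ph (F := F)) := RatFunc.algebraMap_injective F

lemma ph_ne {P : F[X]} (h : P ≠ 0) : ph P ≠ 0 := (map_ne_zero_iff _ ph_inj).mpr h

noncomputable def em : F →+* RatFunc F := ph.comp C

lemma em_inj : Function.Injective (em (F := F)) := RingHom.injective (em (F := F))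

noncomputable def Phi1 (q : (F × F) × F) : RatFunc F × RatFunc F × RatFunc F :=
  (ph (pU1 q) / ph (pU4 q), em q.1.1 / ph (pU4 q), em q.1.2 / ph (pU4 q))
noncomputable def Phi2 (q : (F × F) × F) : RatFunc F × RatFunc F × RatFunc F :=
  (ph (pV2 q) / ph (pV3 q), - em q.1.1 / ph (pV3 q), - em q.1.2 / ph (pV3 q))

lemma Phi1_fst {q r : (F × F) × F} (h : (Phi1 q).1 = (Phi1 r).1) : q = r := by
  apply pU_inj
  apply ph_inj
  have h1 := ph_ne (pU4_ne q)
  have h2 := ph_ne (pU4_ne r)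
  simp only [Phi1] at h
  rw [div_eq_div_iff h1 h2] at h
  rw [map_mul, map_mul, h]

lemma Phi2_fst {q r : (F × F) × F} (h : (Phi2 q).1 = (Phi2 r).1) : q = r := by
  apply pV_inj
  apply ph_inj
  have h1 := ph_ne (pV3_ne q)
  have h2 := ph_ne (pV3_ne r)
  simp only [Phi2] at h
  rw [div_eq_div_iff h1 h2] at h
  rw [map_mul, map_mul, h]

lemma Phi_inc (q r : (F × F) × F) : Inc (Phi1 q) (Phi2 r) ↔
    q.1.1 * r.2 + q.1.2 = r.1.1 * q.2 + r.1.2 := by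
  have h1 := ph_ne (pU4_ne q)
  have h2 := ph_ne (pV3_ne r)
  have hp : C q.1.1 * pV2 r + C q.1.2 * pV3 r + C r.1.1 * pU1 q + C r.1.2 * pU4 q
      = C (q.1.1 * r.2 + q.1.2) - C (r.1.1 * q.2 + r.1.2) := by
    simp only [pV2, pV3, pU1, pU4, C_add, C_mul, C_1]; ring
  have hp' := congrArg ph hp
  simp only [map_add, map_sub, map_mul] at hp'
  unfold Inc Phi1 Phi2
  simp only
  have key : (em q.1.1 / ph (pU4 q) * (ph (pV2 r) / ph (pV3 r)) + em q.1.2 / ph (pU4 q)) -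
     (-em r.1.1 / ph (pV3 r) * (ph (pU1 q) / ph (pU4 q)) + -em r.1.2 / ph (pV3 r))
     = (em (q.1.1 * r.2 + q.1.2) - em (r.1.1 * q.2 + r.1.2)) / (ph (pU4 q) * ph (pV3 r)) := by
    field_simp
    simp only [em, RingHom.comp_apply, map_add, map_mul]
    linear_combination hp'
  rw [← sub_eq_zero, key, div_eq_zero_iff]
  have : ph (pU4 q) * ph (pV3 r) ≠ 0 := mul_ne_zero h1 h2
  simp only [this, or_false]
  rw [sub_eq_zero]
  exact em_inj.eq_iff

/-- all the collinearity relations from a linear parametrisation by two vectors -/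
lemma rel_of_param (w : Fin 3 → (F × F) × F) (U V : Fin 3 → RatFunc F)
    (α α' β β' γ γ' ε ε' : RatFunc F)
    (h1 : ∀ i, em (w i).1.1 = α * U i + α' * V i)
    (h2 : ∀ i, em (w i).1.2 = β * U i + β' * V i)
    (h3 : ∀ i, em (w i).2 = γ * U i + γ' * V i)
    (h4 : ∀ i, 1 = ε * U i + ε' * V i) :
      (((w 0).1.1 - (w 2).1.1) * ((w 1).1.2 - (w 2).1.2) = ((w 1).1.1 - (w 2).1.1) * ((w 0).1.2 - (w 2).1.2)) ∧
      (((w 0).1.1 - (w 2).1.1) * ((w 1).2 - (w 2).2) = ((w 1).1.1 - (w 2).1.1) * ((w 0).2 - (w 2).2)) ∧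
      (((w 0).1.2 - (w 2).1.2) * ((w 1).2 - (w 2).2) = ((w 1).1.2 - (w 2).1.2) * ((w 0).2 - (w 2).2)) := by
  have d1 := det3 _ _ _ _ _ _ U V _ _ (fun _ => 1) h1 h2 h4
  have d2 := det3 _ _ _ _ _ _ U V _ _ (fun _ => 1) h1 h3 h4
  have d3 := det3 _ _ _ _ _ _ U V _ _ (fun _ => 1) h2 h3 h4
  refine ⟨?_, ?_, ?_⟩ <;> apply em_inj <;> simp only [map_mul, map_sub]
  · linear_combination d1
  · linear_combination d2
  · linear_combination d3

lemma Phi1_reg [DecidableEq F] (A : Finset F) (G : Finset (F × F)) (k : ℕ)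
    (hk : 2 ≤ k) (hG : ∀ g ∈ G, k ≤ ri A g) (S : Finset ((F × F) × F)) (hS : S ⊆ G ×ˢ A)
    (α β γ δ : RatFunc F)
    (h : ∀ q ∈ S, (Phi1 q).2.1 = α * (Phi1 q).1 + γ ∧ (Phi1 q).2.2 = β * (Phi1 q).1 + δ) :
    (S.card : ℝ) ≤ A.card + 2 * (A.card : ℝ) ^ 2 / k := by
  refine triple_card A G k hk hG S hS fun w hw => ?_
  have e1 : ∀ i, em (w i).1.1 = α * ph (pU1 (w i)) + γ * ph (pU4 (w i)) := by
    intro i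
    have h1 := ph_ne (pU4_ne (w i))
    have := (h _ (hw i)).1
    simp only [Phi1] at this
    field_simp at this
    linear_combination this
  have e2 : ∀ i, em (w i).1.2 = β * ph (pU1 (w i)) + δ * ph (pU4 (w i)) := by
    intro i
    have h1 := ph_ne (pU4_ne (w i))
    have := (h _ (hw i)).2
    simp only [Phi1] at this
    field_simp at this
    linear_combination this
  refine rel_of_param w (fun i => ph (pU1 (w i))) (fun i => ph (pU4 (w i))) α γ β δ
    (α * ph X + β * ph (X ^ 2) - 1) (γ * ph X + δ * ph (X ^ 2))
    (α * ph (X ^ 4) + β * ph (X ^ 8)) (γ * ph (X ^ 4) + δ * ph (X ^ 8) - 1) e1 e2 ?_ ?_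
  · intro i
    have : ph (pU1 (w i)) = em (w i).1.1 * ph X + em (w i).1.2 * ph (X ^ 2) - em (w i).2 := by
      simp [pU1, em]
    linear_combination this + ph X * e1 i + ph (X ^ 2) * e2 i
  · intro i
    have : ph (pU4 (w i)) = em (w i).1.1 * ph (X ^ 4) + em (w i).1.2 * ph (X ^ 8) - 1 := by
      simp [pU4, em]
    linear_combination this + ph (X ^ 4) * e1 i + ph (X ^ 8) * e2 i

lemma Phi2_reg [DecidableEq F] (A : Finset F) (G : Finset (F × F)) (k : ℕ)
    (hk : 2 ≤ k) (hG : ∀ g ∈ G, k ≤ ri A g) (S : Finset ((F × F) × F)) (hS : S ⊆ G ×ˢ A)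
    (α β γ δ : RatFunc F)
    (h : ∀ q ∈ S, (Phi2 q).2.1 = α * (Phi2 q).1 + γ ∧ (Phi2 q).2.2 = β * (Phi2 q).1 + δ) :
    (S.card : ℝ) ≤ A.card + 2 * (A.card : ℝ) ^ 2 / k := by
  refine triple_card A G k hk hG S hS fun w hw => ?_
  have e1 : ∀ i, em (w i).1.1 = (-α) * ph (pV2 (w i)) + (-γ) * ph (pV3 (w i)) := by
    intro i
    have h1 := ph_ne (pV3_ne (w i))
    have := (h _ (hw i)).1
    simp only [Phi2] at this
    field_simp at this
    linear_combination - this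
  have e2 : ∀ i, em (w i).1.2 = (-β) * ph (pV2 (w i)) + (-δ) * ph (pV3 (w i)) := by
    intro i
    have h1 := ph_ne (pV3_ne (w i))
    have := (h _ (hw i)).2
    simp only [Phi2] at this
    field_simp at this
    linear_combination - this
  refine rel_of_param w (fun i => ph (pV2 (w i))) (fun i => ph (pV3 (w i))) (-α) (-γ) (-β) (-δ)
    (1 - α * ph X - β * ph (X ^ 4)) (- γ * ph X - δ * ph (X ^ 4))
    (- α * ph (X ^ 2) - β * ph (X ^ 8)) (1 - γ * ph (X ^ 2) - δ * ph (X ^ 8)) e1 e2 ?_ ?_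
  · intro i
    have : ph (pV2 (w i)) = em (w i).2 - em (w i).1.1 * ph X - em (w i).1.2 * ph (X ^ 4) := by
      simp [pV2, em]
    linear_combination - this + ph X * e1 i + ph (X ^ 4) * e2 i
  · intro i
    have : ph (pV3 (w i)) = 1 - em (w i).1.1 * ph (X ^ 2) - em (w i).1.2 * ph (X ^ 8) := by
      simp [pV3, em]
    linear_combination - this + ph (X ^ 2) * e1 i + ph (X ^ 8) * e2 i

end gen
end LI
set_option linter.unusedSectionVars false

namespace LI

section fp
variable {F : Type*} [Field F] [DecidableEq F]

/-- Cauchy-Schwarz for rich maps -/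
lemma cs_rich (A : Finset F) (G : Finset (F × F)) (k : ℕ) (hG : ∀ g ∈ G, k ≤ ri A g) :
    (G.card * k) ^ 2 ≤ A.card *
      (((G ×ˢ A) ×ˢ (G ×ˢ A)).filter (fun z : ((F × F) × F) × ((F × F) × F) =>
        z.1.1.1 * z.2.2 + z.1.1.2 = z.2.1.1 * z.1.2 + z.2.1.2)).card := by
  classical
  let W : F → Finset ((F × F) × F) := fun y => (G ×ˢ A).filter (fun q => q.1.1 * q.2 + q.1.2 = y)
  have h1 : G.card * k ≤ ∑ y ∈ A, (W y).card := by
    calc G.card * k = ∑ g ∈ G, k := by simp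
      _ ≤ ∑ g ∈ G, ri A g := Finset.sum_le_sum hG
      _ = ∑ g ∈ G, ∑ x ∈ A, ∑ y ∈ A, (if g.1 * x + g.2 = y then 1 else 0) := by
          refine Finset.sum_congr rfl fun g _ => ?_
          unfold ri
          rw [Finset.card_filter]
          refine Finset.sum_congr rfl fun x _ => ?_
          rw [Finset.sum_ite_eq]
      _ = ∑ y ∈ A, (W y).card := by
          simp only [W, Finset.card_filter, Finset.sum_product]
          rw [Finset.sum_comm' (t' := A) (s' := fun _ => G) (by simp [and_comm]),]
          conv_rhs => rw [Finset.sum_comm]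
          rw [Finset.sum_comm]
          refine Finset.sum_congr rfl fun x _ => ?_
          rw [Finset.sum_comm]
  have h2 : (∑ y ∈ A, (W y).card) ^ 2 ≤ A.card * ∑ y ∈ A, (W y).card ^ 2 :=
    sq_sum_le_card_mul_sum_sq
  have h3 : ∑ y ∈ A, (W y).card ^ 2 ≤ (((G ×ˢ A) ×ˢ (G ×ˢ A)).filter (fun z : ((F × F) × F) × ((F × F) × F) =>
        z.1.1.1 * z.2.2 + z.1.1.2 = z.2.1.1 * z.1.2 + z.2.1.2)).card := by
    calc ∑ y ∈ A, (W y).card ^ 2 = (A.sigma (fun y => W y ×ˢ W y)).card := by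
          rw [Finset.card_sigma]
          refine Finset.sum_congr rfl fun y _ => ?_
          rw [Finset.card_product, sq]
      _ ≤ _ := by
          apply Finset.card_le_card_of_injOn (fun s => ((s.2.1.1, s.2.2.2), (s.2.2.1, s.2.1.2)))
          · rintro ⟨y, ⟨g, x⟩, ⟨g', x'⟩⟩ h
            simp [W] at h
            simp [h.2.1.1, h.2.2.1, h.2.1.2, h.2.2.2]
          · rintro ⟨y, ⟨g, x⟩, ⟨g', x'⟩⟩ h ⟨y1, ⟨g1, x1⟩, ⟨g1', x1'⟩⟩ h' he
            simp [W] at h h'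
            simp only [Prod.mk.injEq] at he
            obtain ⟨⟨rfl, rfl⟩, rfl, rfl⟩ := he
            have : y = y1 := by rw [← h.2.1.2, ← h'.2.1.2]
            subst this
            rfl
  calc _ ≤ (∑ y ∈ A, (W y).card) ^ 2 := Nat.pow_le_pow_left h1 2
    _ ≤ _ := h2
    _ ≤ _ := Nat.mul_le_mul_left _ h3

lemma final_arith {N A k C M : ℝ} (hN : 0 < N) (hA : 0 < A) (hk : 0 < k) (hC : 1 ≤ C)
    (hkA : k ≤ A) (hM : M = A + 2 * A ^ 2 / k)
    (h : (N * k) ^ 2 ≤ A * (C * (√(N * A) * √(N * A) * (√(N * A) + √(N * A) + M)))) :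
    N ≤ 16 * C ^ 2 * A ^ 5 / k ^ 4 := by
  have hs : √(N * A) * √(N * A) = N * A := Real.mul_self_sqrt (by positivity)
  set s := √(N * A) with hsdef
  have hs0 : 0 ≤ s := Real.sqrt_nonneg _
  have hM' : M ≤ 3 * A ^ 2 / k := by
    rw [hM, le_div_iff₀ hk, add_mul, div_mul_cancel₀ _ hk.ne']
    nlinarith
  rw [hs] at h
  have h1 : N * k ^ 2 ≤ C * A ^ 2 * (2 * s + 3 * A ^ 2 / k) := by
    have : N * (N * k ^ 2) ≤ N * (C * A ^ 2 * (2 * s + M)) := by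
      calc _ = (N * k) ^ 2 := by ring
        _ ≤ _ := h
        _ = _ := by ring
    have := le_of_mul_le_mul_left this hN
    refine this.trans ?_
    gcongr
  rw [le_div_iff₀ (by positivity)]
  rcases le_total (3 * A ^ 2 / k) (2 * s) with hc | hc
  · have h2 : N * k ^ 2 ≤ 4 * C * A ^ 2 * s := by
      calc _ ≤ _ := h1
        _ ≤ C * A ^ 2 * (2 * s + 2 * s) := by gcongr
        _ = _ := by ring
    have h3 : (N * k ^ 2) ^ 2 ≤ (4 * C * A ^ 2 * s) ^ 2 := by gcongr
    have h4 : N * (N * k ^ 4) ≤ N * (16 * C ^ 2 * A ^ 5) := by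
      calc _ = (N * k ^ 2) ^ 2 := by ring
        _ ≤ _ := h3
        _ = 16 * C ^ 2 * A ^ 4 * (s * s) := by ring
        _ = _ := by rw [hs]; ring
    exact le_of_mul_le_mul_left h4 hN
  · have h2 : N * k ^ 2 ≤ 6 * C * A ^ 4 / k := by
      calc _ ≤ _ := h1
        _ ≤ C * A ^ 2 * (3 * A ^ 2 / k + 3 * A ^ 2 / k) := by gcongr
        _ = _ := by ring
    rw [le_div_iff₀ hk] at h2
    calc N * k ^ 4 = (N * k ^ 2 * k) * k := by ring
      _ ≤ (6 * C * A ^ 4) * A := by gcongr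
      _ = 6 * C * A ^ 5 := by ring
      _ ≤ 16 * C ^ 2 * A ^ 5 := by
          gcongr ?_ * _
          nlinarith

/-- rich maps, few of them -/
lemma rich_small (p : ℕ) [Fact p.Prime] (A : Finset (ZMod p)) (G : Finset (ZMod p × ZMod p)) (k : ℕ)
    (hk : 2 ≤ k) (hG : ∀ g ∈ G, k ≤ ri A g) (hsmall : G.card * A.card ≤ p ^ 2) :
    (G.card : ℝ) ≤ 16 * 20000000 ^ 2 * (A.card : ℝ) ^ 5 / (k : ℝ) ^ 4 := by
  classical
  rcases G.eq_empty_or_nonempty with rfl | ⟨g0, hg0⟩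
  · simp; positivity
  have hkA : k ≤ A.card := (hG g0 hg0).trans (ri_le A g0)
  have hA : 0 < A.card := by omega
  have hN : 0 < G.card := Finset.card_pos.mpr ⟨g0, hg0⟩
  set M : ℝ := A.card + 2 * (A.card : ℝ) ^ 2 / k with hM
  let L1 := (G ×ˢ A).image Phi1
  let L2 := (G ×ˢ A).image Phi2
  have i1 : Function.Injective (Phi1 (F := ZMod p)) := fun q r h => Phi1_fst (by rw [h])
  have i2 : Function.Injective (Phi2 (F := ZMod p)) := fun q r h => Phi2_fst (by rw [h])
  have c1 : L1.card = G.card * A.card := by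
    rw [Finset.card_image_of_injective _ i1, Finset.card_product]
  have c2 : L2.card = G.card * A.card := by
    rw [Finset.card_image_of_injective _ i2, Finset.card_product]
  have hreg : Reg L1 L2 M := by
    intro α β γ δ
    constructor
    · simp only [L1]
      rw [Finset.filter_image, Finset.card_image_of_injective _ i1]
      apply Phi1_reg A G k hk hG _ (Finset.filter_subset _ _) α β γ δ
      intro q hq
      exact (Finset.mem_filter.mp hq).2
    · simp only [L2]
      rw [Finset.filter_image, Finset.card_image_of_injective _ i2]
      apply Phi2_reg A G k hk hG _ (Finset.filter_subset _ _) α γ β δ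
      intro q hq
      exact (Finset.mem_filter.mp hq).2
  have hinf : Infinite (RatFunc (ZMod p)) := Infinite.of_injective _ (ph_inj (F := ZMod p))
  have : CharP (RatFunc (ZMod p)) p := by
    exact charP_of_injective_ringHom (em_inj (F := ZMod p)) p
  have hmain := inc_bound (K := RatFunc (ZMod p)) p
    (by
      intro j hj hjp h0
      rw [CharP.cast_eq_zero_iff (RatFunc (ZMod p)) p] at h0
      exact absurd (Nat.le_of_dvd hj h0) (by omega))
    M (by positivity) _ L1 L2 le_rfl
    (by
      intro a ha b hb h
      obtain ⟨q, hq, rfl⟩ := Finset.mem_image.mp (Finset.mem_coe.mp ha)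
      obtain ⟨r, hr, rfl⟩ := Finset.mem_image.mp (Finset.mem_coe.mp hb)
      rw [Phi1_fst h])
    (by
      intro a ha b hb h
      obtain ⟨q, hq, rfl⟩ := Finset.mem_image.mp (Finset.mem_coe.mp ha)
      obtain ⟨r, hr, rfl⟩ := Finset.mem_image.mp (Finset.mem_coe.mp hb)
      rw [Phi2_fst h])
    hreg (Or.inl (by rw [c1]; exact hsmall))
  have hinc : inc L1 L2 = (((G ×ˢ A) ×ˢ (G ×ˢ A)).filter
      (fun z : ((ZMod p × ZMod p) × ZMod p) × ((ZMod p × ZMod p) × ZMod p) =>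
        z.1.1.1 * z.2.2 + z.1.1.2 = z.2.1.1 * z.1.2 + z.2.1.2)).card := by
    unfold inc
    rw [Finset.sum_image (fun _ _ _ _ h => i1 h)]
    rw [Finset.card_filter, Finset.sum_product (G ×ˢ A) (G ×ˢ A)]
    refine Finset.sum_congr rfl fun q _ => ?_
    rw [Finset.sum_image (fun _ _ _ _ h => i2 h)]
    refine Finset.sum_congr rfl fun r _ => ?_
    simp only [Phi_inc]
  have hcs := cs_rich A G k hG
  rw [← hinc] at hcs
  have hcs' : ((G.card : ℝ) * k) ^ 2 ≤ A.card * (inc L1 L2 : ℝ) := by exact_mod_cast hcs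
  refine final_arith (M := M) (by exact_mod_cast hN) (by exact_mod_cast hA) (by positivity) (by norm_num)
    (by exact_mod_cast hkA) hM ?_
  rw [c1, c2] at hmain
  push_cast at hmain
  calc _ ≤ _ := hcs'
    _ ≤ _ := by gcongr

end fp
end LI
set_option linter.unusedSectionVars false

namespace LI

section vinh
variable (p : ℕ) [Fact p.Prime]

lemma ri_sum {F : Type*} [Field F] [DecidableEq F] (A : Finset F) (g : F × F) :
    (ri A g : ℝ) = ∑ q ∈ A ×ˢ A, (if g.1 * q.1 + g.2 = q.2 then (1 : ℝ) else 0) := by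
  unfold ri
  rw [Finset.card_filter, Finset.sum_product]
  push_cast
  refine Finset.sum_congr rfl fun x _ => ?_
  rw [Finset.sum_ite_eq]

lemma cnt1 (q : ZMod p × ZMod p) :
    ∑ g : ZMod p × ZMod p, (if g.1 * q.1 + g.2 = q.2 then (1 : ℝ) else 0) = p := by
  rw [Fintype.sum_prod_type]
  have : ∀ a : ZMod p, ∑ b : ZMod p, (if a * q.1 + b = q.2 then (1 : ℝ) else 0) = 1 := by
    intro a
    have : ∀ b : ZMod p, (a * q.1 + b = q.2) ↔ (b = q.2 - a * q.1) := by
      intro b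
      constructor
      · intro h; linear_combination h
      · intro h; linear_combination h
    simp [this]
  simp only [this]
  simp [ZMod.card]

lemma cnt2 (q r : ZMod p × ZMod p) :
    ∑ g : ZMod p × ZMod p, (if g.1 * q.1 + g.2 = q.2 then (1 : ℝ) else 0) *
      (if g.1 * r.1 + g.2 = r.2 then (1 : ℝ) else 0) ≤ (if q = r then (p : ℝ) else 0) + 1 := by
  by_cases h : q = r
  · subst h
    simp only [if_true]
    have : ∀ g : ZMod p × ZMod p, (if g.1 * q.1 + g.2 = q.2 then (1 : ℝ) else 0) *
      (if g.1 * q.1 + g.2 = q.2 then (1 : ℝ) else 0) = (if g.1 * q.1 + g.2 = q.2 then (1 : ℝ) else 0) := by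
      intro g; split_ifs <;> simp
    simp only [this, cnt1]
    linarith
  · simp only [h, if_false, zero_add, ← ite_and, mul_ite, mul_one, mul_zero]
    rw [← Finset.sum_filter, Finset.sum_const, nsmul_eq_mul, mul_one]
    have : (Finset.univ.filter (fun g : ZMod p × ZMod p =>
        g.1 * r.1 + g.2 = r.2 ∧ g.1 * q.1 + g.2 = q.2)).card ≤ 1 := by
      rw [Finset.card_le_one]
      intro g hg g' hg'
      simp at hg hg'
      by_cases hx : q.1 = r.1
      · exact absurd (Prod.ext hx (by rw [← hg.1, ← hg.2, hx])) h
      · have h1 : (g.1 - g'.1) * (q.1 - r.1) = 0 := by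
          linear_combination hg.2 - hg.1 - hg'.2 + hg'.1
        have h2 : g.1 = g'.1 := by
          rcases mul_eq_zero.mp h1 with h | h
          · exact sub_eq_zero.mp h
          · exact absurd (sub_eq_zero.mp h) hx
        refine Prod.ext h2 ?_
        have h3 := hg.1
        have h4 := hg'.1
        rw [h2] at h3
        linear_combination h3 - h4
    exact_mod_cast this

lemma vinh (A : Finset (ZMod p)) :
    ∑ g : ZMod p × ZMod p, ((ri A g : ℝ) - (A.card : ℝ) ^ 2 / p) ^ 2 ≤ p * (A.card : ℝ) ^ 2 := by
  have hp : (0 : ℝ) < p := by exact_mod_cast (Fact.out : p.Prime).pos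
  have s1 : ∑ g : ZMod p × ZMod p, (ri A g : ℝ) = p * (A.card : ℝ) ^ 2 := by
    simp only [ri_sum]
    rw [Finset.sum_comm]
    simp only [cnt1]
    simp
    ring
  have s2 : ∑ g : ZMod p × ZMod p, (ri A g : ℝ) ^ 2 ≤ p * (A.card : ℝ) ^ 2 + (A.card : ℝ) ^ 4 := by
    have : ∀ g, (ri A g : ℝ) ^ 2 = ∑ q ∈ A ×ˢ A, ∑ r ∈ A ×ˢ A,
        (if g.1 * q.1 + g.2 = q.2 then (1 : ℝ) else 0) * (if g.1 * r.1 + g.2 = r.2 then (1 : ℝ) else 0) := by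
      intro g
      rw [ri_sum, sq, Finset.sum_mul_sum]
    simp only [this]
    rw [Finset.sum_comm]
    calc _ ≤ ∑ q ∈ A ×ˢ A, ∑ r ∈ A ×ˢ A, ((if q = r then (p : ℝ) else 0) + 1) := by
          refine Finset.sum_le_sum fun q _ => ?_
          rw [Finset.sum_comm]
          exact Finset.sum_le_sum fun r _ => cnt2 p q r
      _ = ∑ q ∈ A ×ˢ A, ((p : ℝ) + (A.card : ℝ) ^ 2) := by
          refine Finset.sum_congr rfl fun q hq => ?_
          rw [Finset.sum_add_distrib, Finset.sum_ite_eq, if_pos hq]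
          simp [sq]
      _ = _ := by
          simp
          ring
  have : ∀ g : ZMod p × ZMod p, ((ri A g : ℝ) - (A.card : ℝ) ^ 2 / p) ^ 2 =
      (ri A g : ℝ) ^ 2 - 2 * ((A.card : ℝ) ^ 2 / p) * (ri A g : ℝ) + ((A.card : ℝ) ^ 2 / p) ^ 2 := by
    intro g; ring
  simp only [this]
  rw [Finset.sum_add_distrib, Finset.sum_sub_distrib, ← Finset.mul_sum, s1]
  have h3 : ∑ g : ZMod p × ZMod p, ((A.card : ℝ) ^ 2 / p) ^ 2 = (A.card : ℝ) ^ 4 := by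
    rw [Finset.sum_const, nsmul_eq_mul, Finset.card_univ, Fintype.card_prod, ZMod.card]
    push_cast
    field_simp
  have h4 : 2 * ((A.card : ℝ) ^ 2 / p) * (p * (A.card : ℝ) ^ 2) = 2 * (A.card : ℝ) ^ 4 := by
    field_simp
  rw [h3, h4]
  linarith

lemma vinh_rich (A : Finset (ZMod p)) (G : Finset (ZMod p × ZMod p)) (k : ℝ) (hk0 : 0 < k)
    (hG : ∀ g ∈ G, k ≤ ri A g) (hk : 2 * (A.card : ℝ) ^ 2 / p ≤ k) :
    (G.card : ℝ) ≤ 4 * p * (A.card : ℝ) ^ 2 / k ^ 2 := by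
  have h := vinh p A
  have h1 : ∑ g ∈ G, (k / 2) ^ 2 ≤ p * (A.card : ℝ) ^ 2 := by
    refine le_trans ?_ h
    calc _ ≤ ∑ g ∈ G, ((ri A g : ℝ) - (A.card : ℝ) ^ 2 / p) ^ 2 := by
          refine Finset.sum_le_sum fun g hg => ?_
          have := hG g hg
          have h2 : 2 * (A.card : ℝ) ^ 2 / p = 2 * ((A.card : ℝ) ^ 2 / p) := by ring
          gcongr
          linarith
      _ ≤ _ := Finset.sum_le_sum_of_subset_of_nonneg (Finset.subset_univ _) (fun _ _ _ => by positivity)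
  rw [Finset.sum_const, nsmul_eq_mul] at h1
  rw [le_div_iff₀ (by positivity)]
  linarith

/-- the bound for the number of rich maps over the prime field -/
lemma rich_fp (A : Finset (ZMod p)) (G : Finset (ZMod p × ZMod p)) (k : ℕ)
    (hk : 2 ≤ k) (hG : ∀ g ∈ G, k ≤ ri A g) (hkp : 2 * (A.card : ℝ) ^ 2 / p ≤ k) :
    (G.card : ℝ) ≤ 8 * (16 * 20000000 ^ 2) * (A.card : ℝ) ^ 5 / (k : ℝ) ^ 4 := by
  classical
  set C : ℝ := 16 * 20000000 ^ 2 with hC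
  have hp : 0 < p := (Fact.out : p.Prime).pos
  have hp' : (0 : ℝ) < p := by exact_mod_cast hp
  have hk0 : (0 : ℝ) < k := by positivity
  have hC1 : 1 ≤ C := by rw [hC]; norm_num
  rcases le_or_gt (G.card * A.card) (p ^ 2) with hs | hs
  · have := rich_small p A G k hk hG hs
    rw [← hC] at this
    refine this.trans ?_
    gcongr ?_ * _ / _
    linarith
  have hA : 0 < A.card := by
    rcases Nat.eq_zero_or_pos A.card with h | h
    · rw [h] at hs; simp at hs
    · exact h
  have hA' : (0 : ℝ) < A.card := by exact_mod_cast hA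
  have hAp : A.card ≤ p := by
    have := Finset.card_le_univ A
    rwa [ZMod.card] at this
  have hn1 : 1 ≤ p ^ 2 / A.card := by
    rw [Nat.one_le_div_iff hA]
    nlinarith
  obtain ⟨G', hG', hc⟩ := Finset.exists_subset_card_eq (s := G) (n := p ^ 2 / A.card)
    (Nat.div_le_of_le_mul (by rw [mul_comm]; exact hs.le))
  have h1 := rich_small p A G' k hk (fun g hg => hG g (hG' hg))
    (by rw [hc]; exact Nat.div_mul_le_self _ _)
  have h2 : (p : ℝ) ^ 2 ≤ 2 * A.card * G'.card := by
    have h3 := Nat.lt_div_mul_add (a := p ^ 2) hA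
    rw [hc]
    have : p ^ 2 ≤ 2 * A.card * (p ^ 2 / A.card) := by nlinarith
    exact_mod_cast this
  rw [← hC, le_div_iff₀ (by positivity)] at h1
  have h4 : ((p : ℝ) * k ^ 2) ^ 2 ≤ (2 * C * (A.card : ℝ) ^ 3) ^ 2 := by
    calc ((p : ℝ) * k ^ 2) ^ 2 = (p : ℝ) ^ 2 * (k : ℝ) ^ 4 := by ring
      _ ≤ (2 * (A.card : ℝ) * G'.card) * (k : ℝ) ^ 4 := by gcongr
      _ = 2 * (A.card : ℝ) * (G'.card * (k : ℝ) ^ 4) := by ring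
      _ ≤ 2 * (A.card : ℝ) * (C * (A.card : ℝ) ^ 5) := by gcongr
      _ = (2 * C * 1) * (A.card : ℝ) ^ 6 := by ring
      _ ≤ (2 * C * (2 * C)) * (A.card : ℝ) ^ 6 := by gcongr; linarith
      _ = _ := by ring
  have h5 : (p : ℝ) * k ^ 2 ≤ 2 * C * (A.card : ℝ) ^ 3 :=
    (sq_le_sq₀ (by positivity) (by positivity)).mp h4
  have h6 := vinh_rich p A G k hk0 (fun g hg => by exact_mod_cast hG g hg) hkp
  rw [le_div_iff₀ (by positivity)] at h6 ⊢
  calc (G.card : ℝ) * k ^ 4 = (G.card * k ^ 2) * k ^ 2 := by ring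
    _ ≤ (4 * p * (A.card : ℝ) ^ 2) * k ^ 2 := by gcongr
    _ = 4 * (A.card : ℝ) ^ 2 * (p * k ^ 2) := by ring
    _ ≤ 4 * (A.card : ℝ) ^ 2 * (2 * C * (A.card : ℝ) ^ 3) := by gcongr
    _ = _ := by ring

end vinh
end LI
set_option linter.unusedSectionVars false

namespace LI

section reals

lemma collide {α : Type*} [DecidableEq α] (S : Finset α) (h : α → ℕ) (V : ℕ) (hV : ∀ x ∈ S, h x < V) :
    S.card ≤ V + (S.offDiag.filter (fun z => h z.1 = h z.2)).card := by
  have h1 : S.card = ∑ v ∈ Finset.range V, (S.filter (fun x => h x = v)).card :=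
    Finset.card_eq_sum_card_fiberwise (fun x hx => by simpa using hV x hx)
  have h2 : (S.offDiag.filter (fun z => h z.1 = h z.2)).card
      = ∑ v ∈ Finset.range V, ((S.offDiag.filter (fun z => h z.1 = h z.2)).filter (fun z => h z.1 = v)).card :=
    Finset.card_eq_sum_card_fiberwise (fun x hx => by
      simp at hx
      simpa using hV _ hx.1.1)
  rw [h1, h2]
  have h3 : V = ∑ v ∈ Finset.range V, 1 := by simp
  conv_rhs => rw [h3]
  simp only [Finset.sum_const, smul_eq_mul, mul_one, Finset.card_range]
  conv_rhs => lhs; rw [h3]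
  rw [← Finset.sum_add_distrib]
  refine Finset.sum_le_sum fun v _ => ?_
  have h4 : (S.filter (fun x => h x = v)).offDiag ⊆
      ((S.offDiag.filter (fun z => h z.1 = h z.2)).filter (fun z => h z.1 = v)) := by
    rintro ⟨x, y⟩ hz
    simp at hz ⊢
    grind
  have h5 := Finset.card_le_card h4
  rw [Finset.offDiag_card] at h5
  set f := (S.filter (fun x => h x = v)).card
  have : f ≤ 1 + (f * f - f) := by
    rcases f with _ | _ | f
    · simp
    · simp
    · have : (f + 1 + 1) * (f + 1 + 1) = (f + 1 + 1) + (f + 1) * (f + 1 + 1) := by ring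
      rw [this, Nat.add_sub_cancel_left]
      nlinarith
  omega

noncomputable def rk (A : Finset ℝ) (x : ℝ) : ℕ := (A.filter (fun a => a < x)).card

lemma rk_mono (A : Finset ℝ) {x y : ℝ} (h : x ≤ y) : rk A x ≤ rk A y := by
  apply Finset.card_le_card
  intro a ha
  simp at ha ⊢
  exact ⟨ha.1, lt_of_lt_of_le ha.2 h⟩

lemma rk_lt (A : Finset ℝ) {x y : ℝ} (hx : x ∈ A) (h : x < y) : rk A x < rk A y := by
  apply Finset.card_lt_card
  rw [Finset.ssubset_iff_of_subset]
  · exact ⟨x, by simp [hx, h], by simp⟩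
  · intro a ha
    simp at ha ⊢
    exact ⟨ha.1, ha.2.trans h⟩

lemma rk_inj (A : Finset ℝ) {x y : ℝ} (hx : x ∈ A) (hy : y ∈ A) (h : rk A x = rk A y) : x = y := by
  rcases lt_trichotomy x y with h1 | h1 | h1
  · have := rk_lt A hx h1; omega
  · exact h1
  · have := rk_lt A hy h1; omega

lemma blk_card (A : Finset ℝ) (w : ℕ) (hw : 0 < w) (j : ℕ) :
    (A.filter (fun x => rk A x / w = j)).card ≤ w := by
  have : (A.filter (fun x => rk A x / w = j)).card ≤ (Finset.Ico (j * w) (j * w + w)).card := by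
    apply Finset.card_le_card_of_injOn (rk A)
    · intro x hx
      simp at hx
      simp
      have := (Nat.div_eq_iff hw).mp hx.2
      constructor
      · exact this.1
      · have := this.2; omega
    · intro x hx y hy h
      simp at hx hy
      exact rk_inj A hx.1 hy.1 h
  simpa using this

lemma per_line (A : Finset ℝ) (w : ℕ) (g : ℝ × ℝ) (hg : g.1 ≠ 0) :
    ri A g ≤ (2 * (A.card / w) + 1) + (((A.filter (fun x => g.1 * x + g.2 ∈ A)).offDiag).filter
      (fun z => rk A z.1 / w = rk A z.2 / w ∧
        rk A (g.1 * z.1 + g.2) / w = rk A (g.1 * z.2 + g.2) / w)).card := by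
  classical
  set S := A.filter (fun x => g.1 * x + g.2 ∈ A) with hS
  set B := A.card / w
  have hB : ∀ x, rk A x / w ≤ B := fun x => Nat.div_le_div_right (Finset.card_filter_le _ _)
  let h : ℝ → ℕ := fun x => rk A x / w + (if 0 < g.1 then rk A (g.1 * x + g.2) / w
    else B - rk A (g.1 * x + g.2) / w)
  have h1 := collide S h (2 * B + 1) (by
    intro x _
    have h1 := hB x
    have h2 := hB (g.1 * x + g.2)
    simp only [h]
    generalize rk A x / w = u at *
    generalize rk A (g.1 * x + g.2) / w = v at *
    split_ifs
    · omega
    · have := Nat.sub_le B v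
      omega)
  have key : ∀ x y, x ≤ y → h x = h y → rk A x / w = rk A y / w ∧
        rk A (g.1 * x + g.2) / w = rk A (g.1 * y + g.2) / w := by
    intro x y hxy he
    have e1 : rk A x / w ≤ rk A y / w := Nat.div_le_div_right (rk_mono A hxy)
    have b1 := hB (g.1 * x + g.2)
    have b2 := hB (g.1 * y + g.2)
    simp only [h] at he
    by_cases hp : 0 < g.1
    · have e2 : rk A (g.1 * x + g.2) / w ≤ rk A (g.1 * y + g.2) / w :=
        Nat.div_le_div_right (rk_mono A (by nlinarith))
      simp only [hp, if_true] at he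
      omega
    · have hn : g.1 < 0 := lt_of_le_of_ne (not_lt.mp hp) hg
      have e2 : rk A (g.1 * y + g.2) / w ≤ rk A (g.1 * x + g.2) / w :=
        Nat.div_le_div_right (rk_mono A (by nlinarith))
      simp only [hp, if_false] at he
      omega
  refine h1.trans ?_
  gcongr with z hz
  intro he
  rcases le_total z.1 z.2 with hh | hh
  · exact key _ _ hh he
  · have := key _ _ hh he.symm
    exact ⟨this.1.symm, this.2.symm⟩

lemma rich_count (A : Finset ℝ) (G : Finset (ℝ × ℝ)) (hG0 : ∀ g ∈ G, g.1 ≠ 0) (k w : ℕ) (hw : 0 < w)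
    (hG : ∀ g ∈ G, k ≤ ri A g) (hwk : 2 * (2 * (A.card / w) + 1) ≤ k) :
    G.card * k ≤ 2 * (A.card ^ 2 * w ^ 2) := by
  classical
  let D : ℝ × ℝ → Finset (ℝ × ℝ) := fun g => ((A.filter (fun x => g.1 * x + g.2 ∈ A)).offDiag).filter
      (fun z => rk A z.1 / w = rk A z.2 / w ∧
        rk A (g.1 * z.1 + g.2) / w = rk A (g.1 * z.2 + g.2) / w)
  have h1 : G.card * k ≤ 2 * ∑ g ∈ G, (D g).card := by
    rw [Finset.mul_sum]
    calc _ = ∑ g ∈ G, k := by simp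
      _ ≤ _ := by
        refine Finset.sum_le_sum fun g hg => ?_
        have := per_line A w g (hG0 g hg)
        have h2 := hG g hg
        simp only [D]
        omega
  have h2 : ∑ g ∈ G, (D g).card ≤ A.card ^ 2 * w ^ 2 := by
    calc ∑ g ∈ G, (D g).card = (G.sigma D).card := by rw [Finset.card_sigma]
      _ ≤ ((A ×ˢ A).sigma (fun q : ℝ × ℝ => (A.filter (fun x => rk A x / w = rk A q.1 / w)) ×ˢ
            (A.filter (fun x => rk A x / w = rk A q.2 / w)))).card := by
          apply Finset.card_le_card_of_injOn
            (fun s => ⟨(s.2.1, s.1.1 * s.2.1 + s.1.2), (s.2.2, s.1.1 * s.2.2 + s.1.2)⟩)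
          · rintro ⟨g, x, y⟩ h
            simp [D] at h
            simp
            grind
          · rintro ⟨g, x, y⟩ h ⟨g', x', y'⟩ h' he
            simp [D] at h h'
            simp at he
            obtain ⟨⟨rfl, e1⟩, rfl, e2⟩ := he
            have hne : x - y ≠ 0 := sub_ne_zero.mpr h.2.1.2.2
            have e3 : (g.1 - g'.1) * (x - y) = 0 := by linear_combination e1 - e2
            have e4 : g.1 = g'.1 := by
              rcases mul_eq_zero.mp e3 with h | h
              · exact sub_eq_zero.mp h
              · exact absurd h hne
            have e5 : g.2 = g'.2 := by rw [e4] at e1; linarith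
            have : g = g' := Prod.ext e4 e5
            subst this
            rfl
      _ = ∑ q ∈ A ×ˢ A, (A.filter (fun x => rk A x / w = rk A q.1 / w)).card *
            (A.filter (fun x => rk A x / w = rk A q.2 / w)).card := by
          rw [Finset.card_sigma]
          simp only [Finset.card_product]
      _ ≤ ∑ q ∈ A ×ˢ A, w * w := by
          refine Finset.sum_le_sum fun q _ => Nat.mul_le_mul (blk_card A w hw _) (blk_card A w hw _)
      _ = _ := by simp [sq]
  omega

lemma rich_real (A : Finset ℝ) (G : Finset (ℝ × ℝ)) (hG0 : ∀ g ∈ G, g.1 ≠ 0) (k : ℕ) (hk : 4 ≤ k)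
    (hG : ∀ g ∈ G, k ≤ ri A g) :
    (G.card : ℝ) ≤ 162 * (A.card : ℝ) ^ 4 / (k : ℝ) ^ 3 := by
  rcases G.eq_empty_or_nonempty with rfl | ⟨g0, hg0⟩
  · simp; positivity
  have hkA : k ≤ A.card := (hG g0 hg0).trans (ri_le A g0)
  set w := 8 * A.card / k + 1 with hw
  have hk0 : 0 < k := by omega
  have h8 : 8 * A.card < w * k := by
    have := Nat.lt_div_mul_add (a := 8 * A.card) hk0
    rw [hw, add_mul]
    omega
  have hwk : 2 * (2 * (A.card / w) + 1) ≤ k := by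
    have h1 : 8 * (A.card / w) ≤ k := by
      have h2 : w * (A.card / w) ≤ A.card := Nat.mul_div_le _ _
      by_contra hc
      push Not at hc
      have : w * k ≤ w * (8 * (A.card / w)) := Nat.mul_le_mul_left _ hc.le
      nlinarith
    omega
  have h := rich_count A G hG0 k w (Nat.succ_pos _) hG hwk
  have hw9 : w * k ≤ 9 * A.card := by
    have := Nat.div_mul_le_self (8 * A.card) k
    rw [hw, add_mul]
    omega
  have h' : (G.card : ℝ) * k ≤ 2 * ((A.card : ℝ) ^ 2 * (w : ℝ) ^ 2) := by exact_mod_cast h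
  have hw9' : (w : ℝ) * k ≤ 9 * A.card := by exact_mod_cast hw9
  have hk0' : (0 : ℝ) < k := by exact_mod_cast hk0
  rw [le_div_iff₀ (by positivity)]
  calc (G.card : ℝ) * (k : ℝ) ^ 3 = (G.card * k) * (k : ℝ) ^ 2 := by ring
    _ ≤ (2 * ((A.card : ℝ) ^ 2 * (w : ℝ) ^ 2)) * (k : ℝ) ^ 2 := by gcongr
    _ = 2 * (A.card : ℝ) ^ 2 * (w * k) ^ 2 := by ring
    _ ≤ 2 * (A.card : ℝ) ^ 2 * (9 * A.card) ^ 2 := by gcongr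
    _ = _ := by ring

end reals
end LI
set_option linter.unusedSectionVars false

namespace LI

section fin

/-- dyadic summation -/
lemma dyadic {α : Type*} (G : Finset α) (i : α → ℕ) (n : ℕ) (hn : ∀ g ∈ G, i g ≤ n) (d : ℕ) (hd : 1 ≤ d)
    (C : ℝ) (hC : 0 ≤ C) (k0 : ℕ) (hk0 : 1 ≤ k0)
    (hN : ∀ k, k0 ≤ k → ((G.filter (fun g => k ≤ i g)).card : ℝ) ≤ C / (k : ℝ) ^ (d + 2)) :
    ∀ j k : ℕ, k0 ≤ k → n + 1 ≤ j + k →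
      ∑ g ∈ G.filter (fun g => k ≤ i g), (i g : ℝ) ^ 2 ≤ 8 * C / (k : ℝ) ^ d := by
  classical
  intro j
  induction j using Nat.strong_induction_on with
  | _ j ih =>
    intro k hk hj
    have hkpos : 0 < k := by omega
    have hkp : (0 : ℝ) < k := by exact_mod_cast hkpos
    rcases Nat.lt_or_ge n k with hnk | hnk
    · have : G.filter (fun g => k ≤ i g) = ∅ := by
        rw [Finset.filter_eq_empty_iff]
        intro g hg
        have := hn g hg
        omega
      rw [this]
      simp
      positivity
    · have h1 := ih (j - k) (by omega) (2 * k) (by omega) (by omega)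
      have h2 : ∑ g ∈ G.filter (fun g => k ≤ i g), (i g : ℝ) ^ 2 ≤
          ∑ g ∈ G.filter (fun g => 2 * k ≤ i g), (i g : ℝ) ^ 2 +
          ∑ g ∈ G.filter (fun g => k ≤ i g), (4 * (k : ℝ) ^ 2) := by
        rw [Finset.sum_filter, Finset.sum_filter, Finset.sum_filter, ← Finset.sum_add_distrib]
        refine Finset.sum_le_sum fun g _ => ?_
        split_ifs with ha hb hb
        · have : (0 : ℝ) ≤ 4 * (k : ℝ) ^ 2 := by positivity
          linarith
        · have : (i g : ℝ) ≤ 2 * k := by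
            have : i g ≤ 2 * k := by omega
            exact_mod_cast this
          have h3 : (i g : ℝ) ^ 2 ≤ (2 * k) ^ 2 := by gcongr
          nlinarith
        · omega
        · simp
      have h3 := hN k hk
      rw [Finset.sum_const, nsmul_eq_mul] at h2
      have h4 : ((G.filter (fun g => k ≤ i g)).card : ℝ) * (4 * (k : ℝ) ^ 2) ≤ 4 * C / (k : ℝ) ^ d := by
        calc _ ≤ C / (k : ℝ) ^ (d + 2) * (4 * (k : ℝ) ^ 2) := by gcongr
          _ = _ := by field_simp; ring
      have h5 : 8 * C / ((2 * k : ℕ) : ℝ) ^ d ≤ 4 * C / (k : ℝ) ^ d := by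
        push_cast
        rw [mul_pow, div_le_div_iff₀ (by positivity) (by positivity)]
        have h2d : (2 : ℝ) ≤ 2 ^ d := by
          calc (2 : ℝ) = 2 ^ 1 := by norm_num
            _ ≤ 2 ^ d := by gcongr; norm_num
        have : 0 ≤ 4 * C * (k : ℝ) ^ d := by positivity
        nlinarith
      calc _ ≤ _ := h2
        _ ≤ 8 * C / ((2 * k : ℕ) : ℝ) ^ d + 4 * C / (k : ℝ) ^ d := by gcongr
        _ ≤ 4 * C / (k : ℝ) ^ d + 4 * C / (k : ℝ) ^ d := by gcongr
        _ = _ := by ring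

variable {F : Type*} [Field F] [DecidableEq F]

/-- the quotient map -/
noncomputable def gam (z : (F × F) × (F × F)) : F × F := acomp (ainv z.1) z.2

lemma energy_ge (L : Finset (F × F)) :
    ∑ g ∈ (L ×ˢ L).image gam, (((L ×ˢ L).filter (fun z => gam z = g)).card) ^ 2 ≤ affEnergy L := by
  classical
  have h0 : {q : (F × F) × (F × F) × (F × F) × (F × F) |
    q.1 ∈ L ∧ q.2.1 ∈ L ∧ q.2.2.1 ∈ L ∧ q.2.2.2 ∈ L ∧
    acomp (ainv q.1) q.2.1 = acomp (ainv q.2.2.1) q.2.2.2} =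
    (((L ×ˢ L ×ˢ L ×ˢ L).filter (fun q => acomp (ainv q.1) q.2.1 = acomp (ainv q.2.2.1) q.2.2.2) :
      Finset ((F × F) × (F × F) × (F × F) × (F × F))) : Set _) := by
    ext q
    simp [and_assoc]
  unfold affEnergy
  rw [h0, Set.ncard_coe_finset]
  calc _ = (((L ×ˢ L).image gam).sigma (fun g => ((L ×ˢ L).filter (fun z => gam z = g)) ×ˢ
        ((L ×ˢ L).filter (fun z => gam z = g)))).card := by
        rw [Finset.card_sigma]
        simp only [Finset.card_product, sq]
    _ ≤ _ := by
        apply Finset.card_le_card_of_injOn (fun s => (s.2.1.1, s.2.1.2, s.2.2.1, s.2.2.2))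
        · rintro ⟨g, ⟨a, b⟩, ⟨c, d⟩⟩ h
          simp only [Finset.coe_sigma, Set.mem_sigma_iff, Finset.mem_coe, Finset.mem_product,
            Finset.mem_filter] at h
          simp only [Finset.mem_coe, Finset.mem_product, Finset.mem_filter]
          exact ⟨⟨h.2.1.1.1, h.2.1.1.2, h.2.2.1.1, h.2.2.1.2⟩, h.2.1.2.trans h.2.2.2.symm⟩
        · rintro ⟨g, ⟨a, b⟩, ⟨c, d⟩⟩ h ⟨g', ⟨a', b'⟩, ⟨c', d'⟩⟩ h' he
          simp only [Finset.coe_sigma, Set.mem_sigma_iff, Finset.mem_coe, Finset.mem_product,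
            Finset.mem_filter] at h h'
          simp only [Prod.mk.injEq] at he
          obtain ⟨rfl, rfl, rfl, rfl⟩ := he
          have : g = g' := h.2.1.2.symm.trans h'.2.1.2
          subst this
          rfl

lemma im_cs (A : Finset F) (L : Finset (F × F)) (hL : ∀ l ∈ L, l.1 ≠ 0) :
    (L.card * A.card) ^ 2 ≤ (imSet L A).card * ∑ z ∈ L ×ˢ L, ri A (gam z) := by
  classical
  let W : F → Finset ((F × F) × F) := fun y => (L ×ˢ A).filter (fun q => q.1.1 * q.2 + q.1.2 = y)
  have h1 : L.card * A.card = ∑ y ∈ imSet L A, (W y).card := by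
    rw [← Finset.card_product]
    apply Finset.card_eq_sum_card_fiberwise
    intro q hq
    unfold imSet
    exact Finset.mem_coe.mpr (Finset.mem_image_of_mem _ hq)
  have h2 : (∑ y ∈ imSet L A, (W y).card) ^ 2 ≤ (imSet L A).card * ∑ y ∈ imSet L A, (W y).card ^ 2 :=
    sq_sum_le_card_mul_sum_sq
  have h3 : ∑ y ∈ imSet L A, (W y).card ^ 2 ≤ ∑ z ∈ L ×ˢ L, ri A (gam z) := by
    calc ∑ y ∈ imSet L A, (W y).card ^ 2 = ((imSet L A).sigma (fun y => W y ×ˢ W y)).card := by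
          rw [Finset.card_sigma]
          refine Finset.sum_congr rfl fun y _ => ?_
          rw [Finset.card_product, sq]
      _ ≤ ((L ×ˢ L).sigma (fun z => A.filter (fun x => (gam z).1 * x + (gam z).2 ∈ A))).card := by
          have key : ∀ l ∈ L, ∀ l' : F × F, ∀ x x' y : F, l.1 * x + l.2 = y → l'.1 * x' + l'.2 = y →
              (gam (l, l')).1 * x' + (gam (l, l')).2 = x := by
            intro l hl l' x x' y e1 e2
            have := hL l hl
            simp only [gam, acomp, ainv]
            field_simp
            linear_combination e2 - e1
          apply Finset.card_le_card_of_injOn (fun s => ⟨(s.2.1.1, s.2.2.1), s.2.2.2⟩)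
          · rintro ⟨y, ⟨l, x⟩, ⟨l', x'⟩⟩ h
            simp only [Finset.coe_sigma, Set.mem_sigma_iff, Finset.mem_coe, Finset.mem_product,
              Finset.mem_filter, W] at h ⊢
            obtain ⟨-, ⟨⟨hl, hx⟩, e1⟩, ⟨hl', hx'⟩, e2⟩ := h
            refine ⟨⟨hl, hl'⟩, hx', ?_⟩
            rw [key l hl l' x x' y e1 e2]
            exact hx
          · rintro ⟨y, ⟨l, x⟩, ⟨l', x'⟩⟩ h ⟨y1, ⟨l1, x1⟩, ⟨l1', x1'⟩⟩ h' he
            simp only [Finset.coe_sigma, Set.mem_sigma_iff, Finset.mem_coe, Finset.mem_product,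
              Finset.mem_filter, W] at h h'
            simp only [Sigma.mk.injEq, Prod.mk.injEq, heq_eq_eq] at he
            obtain ⟨⟨rfl, rfl⟩, rfl⟩ := he
            obtain ⟨-, ⟨⟨hl, hx⟩, e1⟩, ⟨hl', hx'⟩, e2⟩ := h
            obtain ⟨-, ⟨⟨_, _⟩, e1'⟩, ⟨_, _⟩, e2'⟩ := h'
            have a1 := key l hl l' x x' y e1 e2
            have a2 := key l hl l' x1 x' y1 e1' e2'
            have a3 : x = x1 := a1.symm.trans a2
            have a4 : y = y1 := e2.symm.trans e2'
            subst a3 a4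
            rfl
      _ = _ := by
          rw [Finset.card_sigma]
          rfl
  rw [h1]
  exact h2.trans (Nat.mul_le_mul_left _ h3)

lemma final_gen (A : Finset F) (L : Finset (F × F)) (hL : ∀ l ∈ L, l.1 ≠ 0) (C : ℝ) (hC : 0 ≤ C)
    (d : ℕ) (hd : 1 ≤ d) (k : ℕ) (hk : 1 ≤ k) (hkY : 2 * k * (imSet L A).card ≤ A.card ^ 2)
    (hN : ∀ k', k ≤ k' → ∀ G : Finset (F × F), (∀ g ∈ G, g.1 ≠ 0) → (∀ g ∈ G, k' ≤ ri A g) →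
      (G.card : ℝ) ≤ C / (k' : ℝ) ^ (d + 2)) :
    (L.card : ℝ) ^ 4 * (A.card : ℝ) ^ 4 * (k : ℝ) ^ d ≤
      32 * C * (affEnergy L : ℝ) * ((imSet L A).card : ℝ) ^ 2 := by
  classical
  set Γ := (L ×ˢ L).image gam with hΓ
  set Y : ℝ := ((imSet L A).card : ℝ) with hY
  have hY0 : 0 ≤ Y := by positivity
  have hk0 : (0 : ℝ) < k := by exact_mod_cast hk
  have hΓ0 : ∀ g ∈ Γ, g.1 ≠ 0 := by
    intro g hg
    obtain ⟨z, hz, rfl⟩ := Finset.mem_image.mp hg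
    rw [Finset.mem_product] at hz
    simp only [gam, acomp, ainv]
    exact mul_ne_zero (inv_ne_zero (hL _ hz.1)) (hL _ hz.2)
  let r : F × F → ℝ := fun g => (((L ×ˢ L).filter (fun z => gam z = g)).card : ℝ)
  have hE : ∑ g ∈ Γ, r g ^ 2 ≤ (affEnergy L : ℝ) := by
    have := energy_ge L
    have h2 : ((∑ g ∈ Γ, (((L ×ˢ L).filter (fun z => gam z = g)).card) ^ 2 : ℕ) : ℝ) ≤ (affEnergy L : ℝ) := by
      exact_mod_cast this
    push_cast at h2
    exact h2
  have hS : ∑ g ∈ Γ.filter (fun g => k ≤ ri A g), (ri A g : ℝ) ^ 2 ≤ 8 * C / (k : ℝ) ^ d := by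
    refine dyadic Γ (ri A) A.card (fun g _ => ri_le A g) d hd C hC k hk ?_ (A.card + 1) k le_rfl (by omega)
    intro k' hk'
    refine hN k' hk' _ (fun g hg => hΓ0 g (Finset.mem_filter.mp hg).1) (fun g hg => (Finset.mem_filter.mp hg).2)
  have hsum : (∑ z ∈ L ×ˢ L, (ri A (gam z) : ℝ)) = ∑ g ∈ Γ, r g * ri A g := by
    rw [← Finset.sum_fiberwise_of_maps_to (s := L ×ˢ L) (t := Γ) (g := gam)
      (fun z hz => Finset.mem_image_of_mem _ hz)]
    refine Finset.sum_congr rfl fun g _ => ?_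
    simp only [r]
    rw [← nsmul_eq_mul, ← Finset.sum_const]
    refine Finset.sum_congr rfl fun z hz => ?_
    rw [(Finset.mem_filter.mp hz).2]
  have hr1 : ∑ g ∈ Γ, r g = (L.card : ℝ) ^ 2 := by
    have := Finset.card_eq_sum_card_fiberwise (s := L ×ˢ L) (t := Γ) (f := gam)
      (fun z hz => Finset.mem_coe.mpr (Finset.mem_image_of_mem _ hz))
    simp only [r]
    rw [← Nat.cast_sum, ← this, Finset.card_product]
    push_cast; ring
  set X := ∑ g ∈ Γ.filter (fun g => k ≤ ri A g), r g * ri A g with hX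
  have hX0 : 0 ≤ X := Finset.sum_nonneg fun g _ => by positivity
  have hsplit : ∑ g ∈ Γ, r g * ri A g ≤ k * (L.card : ℝ) ^ 2 + X := by
    rw [← hr1, Finset.mul_sum, hX, Finset.sum_filter, ← Finset.sum_add_distrib]
    refine Finset.sum_le_sum fun g _ => ?_
    have hrg : 0 ≤ r g := by positivity
    split_ifs with h
    · have : 0 ≤ (k : ℝ) * r g := by positivity
      linarith
    · have : (ri A g : ℝ) ≤ k := by
        have : ri A g ≤ k := by omega
        exact_mod_cast this
      nlinarith
  have hXsq : X ^ 2 ≤ (affEnergy L : ℝ) * (8 * C / (k : ℝ) ^ d) := by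
    calc X ^ 2 ≤ (∑ g ∈ Γ.filter (fun g => k ≤ ri A g), r g ^ 2) *
          (∑ g ∈ Γ.filter (fun g => k ≤ ri A g), (ri A g : ℝ) ^ 2) :=
          Finset.sum_mul_sq_le_sq_mul_sq _ _ _
      _ ≤ _ := by
          gcongr
          refine le_trans ?_ hE
          exact Finset.sum_le_sum_of_subset_of_nonneg (Finset.filter_subset _ _) (fun _ _ _ => by positivity)
  have hcs := im_cs A L hL
  have hcs' : ((L.card : ℝ) * A.card) ^ 2 ≤ Y * ∑ z ∈ L ×ˢ L, (ri A (gam z) : ℝ) := by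
    rw [hY]
    exact_mod_cast hcs
  rw [hsum] at hcs'
  have hkY' : 2 * k * Y ≤ (A.card : ℝ) ^ 2 := by rw [hY]; exact_mod_cast hkY
  have h1 : ((L.card : ℝ) * A.card) ^ 2 ≤ 2 * (Y * X) := by
    have h2 : Y * ∑ g ∈ Γ, r g * ri A g ≤ Y * (k * (L.card : ℝ) ^ 2 + X) := by gcongr
    have h3 : (2 * k * Y) * (L.card : ℝ) ^ 2 ≤ (A.card : ℝ) ^ 2 * (L.card : ℝ) ^ 2 := by gcongr
    nlinarith
  calc (L.card : ℝ) ^ 4 * (A.card : ℝ) ^ 4 * (k : ℝ) ^ d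
      = (((L.card : ℝ) * A.card) ^ 2) ^ 2 * (k : ℝ) ^ d := by ring
    _ ≤ (2 * (Y * X)) ^ 2 * (k : ℝ) ^ d := by gcongr
    _ = 4 * Y ^ 2 * X ^ 2 * (k : ℝ) ^ d := by ring
    _ ≤ 4 * Y ^ 2 * ((affEnergy L : ℝ) * (8 * C / (k : ℝ) ^ d)) * (k : ℝ) ^ d := by gcongr
    _ = _ := by field_simp; ring

lemma energy_pos (L : Finset (F × F)) (hL : L.Nonempty) : 0 < affEnergy L := by
  classical
  refine lt_of_lt_of_le ?_ (energy_ge L)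
  obtain ⟨l, hl⟩ := hL
  apply Finset.sum_pos
  · intro g hg
    obtain ⟨z, hz, rfl⟩ := Finset.mem_image.mp hg
    apply pow_pos
    exact Finset.card_pos.mpr ⟨z, Finset.mem_filter.mpr ⟨hz, rfl⟩⟩
  · exact ⟨gam (l, l), Finset.mem_image_of_mem _ (Finset.mem_product.mpr ⟨hl, hl⟩)⟩

lemma im_pos (A : Finset F) (L : Finset (F × F)) (hA : A.Nonempty) (hL : L.Nonempty) :
    0 < (imSet L A).card := by
  unfold imSet
  rw [Finset.card_pos]
  exact (hL.product hA).image _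

/-- choice of the threshold -/
lemma exists_k {a Y : ℕ} (hY : 0 < Y) (h : 8 * Y ≤ a ^ 2) :
    ∃ k : ℕ, 4 ≤ k ∧ 2 * k * Y ≤ a ^ 2 ∧ (a : ℝ) ^ 2 ≤ 4 * Y * k := by
  refine ⟨a ^ 2 / (2 * Y), ?_, ?_, ?_⟩
  · rw [Nat.le_div_iff_mul_le (by omega)]
    omega
  · have := Nat.div_mul_le_self (a ^ 2) (2 * Y)
    linarith
  · have h4 : 4 ≤ a ^ 2 / (2 * Y) := by
      rw [Nat.le_div_iff_mul_le (by omega)]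
      omega
    have := Nat.lt_div_mul_add (a := a ^ 2) (b := 2 * Y) (by omega)
    have h5 : a ^ 2 ≤ 4 * Y * (a ^ 2 / (2 * Y)) := by nlinarith
    exact_mod_cast h5

end fin

lemma real_case (A : Finset ℝ) (L : Finset (ℝ × ℝ)) (hA : A.Nonempty) (hLne : L.Nonempty)
    (hL : ∀ l ∈ L, l.1 ≠ 0) (h8 : 8 * (imSet L A).card ≤ A.card ^ 2) :
    (A.card : ℝ) ^ 2 * (L.card : ℝ) ^ 4 ≤ (128 * 162) * (affEnergy L : ℝ) * ((imSet L A).card : ℝ) ^ 3 := by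
  obtain ⟨k, hk4, hk1, hk2⟩ := exists_k (im_pos A L hA hLne) h8
  have h := final_gen A L hL (162 * (A.card : ℝ) ^ 4) (by positivity) 1 le_rfl k (by omega) hk1
    (by
      intro k' hk' G hG0 hG
      exact rich_real A G hG0 k' (by omega) hG)
  have ha : (0 : ℝ) < A.card := by exact_mod_cast hA.card_pos
  set a : ℝ := (A.card : ℝ)
  set l : ℝ := (L.card : ℝ)
  set Y : ℝ := ((imSet L A).card : ℝ)
  set E : ℝ := (affEnergy L : ℝ)
  have h1 : a ^ 4 * (a ^ 2 * l ^ 4) ≤ a ^ 4 * ((128 * 162) * E * Y ^ 3) := by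
    calc a ^ 4 * (a ^ 2 * l ^ 4) ≤ a ^ 4 * ((4 * Y * k) * l ^ 4) := by gcongr
      _ = 4 * Y * (l ^ 4 * a ^ 4 * (k : ℝ) ^ 1) := by ring
      _ ≤ 4 * Y * (32 * (162 * a ^ 4) * E * Y ^ 2) := by gcongr
      _ = _ := by ring
  exact le_of_mul_le_mul_left h1 (by positivity)

lemma fp_case (p : ℕ) [Fact p.Prime] (A : Finset (ZMod p)) (L : Finset (ZMod p × ZMod p))
    (hA : A.Nonempty) (hLne : L.Nonempty)
    (hL : ∀ l ∈ L, l.1 ≠ 0) (h8 : 8 * (imSet L A).card ≤ A.card ^ 2) (h8p : 8 * (imSet L A).card ≤ p) :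
    (A.card : ℝ) ^ 3 * (L.card : ℝ) ^ 4 ≤
      (512 * (8 * (16 * 20000000 ^ 2))) * (affEnergy L : ℝ) * ((imSet L A).card : ℝ) ^ 4 := by
  have hYpos := im_pos A L hA hLne
  obtain ⟨k, hk4, hk1, hk2⟩ := exists_k hYpos h8
  have hp : (0 : ℝ) < p := by exact_mod_cast (Fact.out : p.Prime).pos
  have h8p' : 8 * ((imSet L A).card : ℝ) ≤ p := by exact_mod_cast h8p
  have h := final_gen A L hL (8 * (16 * 20000000 ^ 2) * (A.card : ℝ) ^ 5) (by positivity) 2 (by omega)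
    k (by omega) hk1
    (by
      intro k' hk' G hG0 hG
      refine rich_fp p A G k' (by omega) hG ?_
      have hkk : (k : ℝ) ≤ k' := by exact_mod_cast hk'
      have hk0 : (0 : ℝ) ≤ k := by positivity
      rw [div_le_iff₀ hp]
      calc 2 * (A.card : ℝ) ^ 2 ≤ 2 * (4 * ((imSet L A).card : ℝ) * k) := by gcongr
        _ = k * (8 * ((imSet L A).card : ℝ)) := by ring
        _ ≤ k' * p := by gcongr)
  have ha : (0 : ℝ) < A.card := by exact_mod_cast hA.card_pos
  set a : ℝ := (A.card : ℝ)
  set l : ℝ := (L.card : ℝ)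
  set Y : ℝ := ((imSet L A).card : ℝ)
  set E : ℝ := (affEnergy L : ℝ)
  set C : ℝ := 8 * (16 * 20000000 ^ 2)
  have h1 : a ^ 5 * (a ^ 3 * l ^ 4) ≤ a ^ 5 * ((512 * C) * E * Y ^ 4) := by
    calc a ^ 5 * (a ^ 3 * l ^ 4) = a ^ 4 * ((a ^ 2) ^ 2 * l ^ 4) := by ring
      _ ≤ a ^ 4 * ((4 * Y * k) ^ 2 * l ^ 4) := by gcongr
      _ = 16 * Y ^ 2 * (l ^ 4 * a ^ 4 * (k : ℝ) ^ 2) := by ring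
      _ ≤ 16 * Y ^ 2 * (32 * (C * a ^ 5) * E * Y ^ 2) := by gcongr
      _ = _ := by ring
  exact le_of_mul_le_mul_left h1 (by positivity)

lemma root_bound {Z D Y : ℝ} (n : ℕ) (hn : 1 ≤ n) (hZ : 0 ≤ Z) (hD : 1 ≤ D) (hY : 0 ≤ Y) (h : Z ≤ D * Y ^ n) :
    Z ^ ((1 : ℝ) / n) ≤ D * Y := by
  have h1 : Z ≤ (D * Y) ^ n := by
    rw [mul_pow]
    refine h.trans ?_
    gcongr
    exact le_self_pow₀ hD (by omega)
  calc Z ^ ((1 : ℝ) / n) ≤ ((D * Y) ^ n) ^ ((1 : ℝ) / n) := by gcongr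
    _ = D * Y := by
        rw [one_div]
        exact Real.pow_rpow_inv_natCast (by positivity) (by omega)

end LI

theorem image_set_lower_bound :
    ∃ c : ℝ, 0 < c ∧
      ((∀ (A : Finset ℝ) (L : Finset (ℝ × ℝ)),
          A.Nonempty → L.Nonempty → (∀ l ∈ L, l.1 ≠ 0) →
          c * min ((A.card : ℝ) ^ 2)
              (((A.card : ℝ) ^ 2 * (L.card : ℝ) ^ 4 / (affEnergy L : ℝ)) ^ ((1 : ℝ) / 3))
            ≤ ((imSet L A).card : ℝ)) ∧
       (∀ (p : ℕ) [Fact p.Prime],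
          ∀ (A : Finset (ZMod p)) (L : Finset (ZMod p × ZMod p)),
          A.Nonempty → L.Nonempty → (∀ l ∈ L, l.1 ≠ 0) →
          c * min (p : ℝ) (min ((A.card : ℝ) ^ 2)
              (((A.card : ℝ) ^ 3 * (L.card : ℝ) ^ 4 / (affEnergy L : ℝ)) ^ ((1 : ℝ) / 4)))
            ≤ ((imSet L A).card : ℝ))) := by
  refine ⟨1 / 10 ^ 20, by positivity, ?_, ?_⟩
  · intro A L hA hLne hL
    have hE : (0 : ℝ) < affEnergy L := by exact_mod_cast LI.energy_pos L hLne
    rw [one_div, inv_mul_le_iff₀ (by positivity)]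
    have hY : (0 : ℝ) ≤ (imSet L A).card := by positivity
    rcases le_or_gt (8 * (imSet L A).card) (A.card ^ 2) with h8 | h8
    · have h := LI.real_case A L hA hLne hL h8
      refine (min_le_right _ _).trans ?_
      have := LI.root_bound (Z := (A.card : ℝ) ^ 2 * (L.card : ℝ) ^ 4 / (affEnergy L : ℝ)) (D := 10 ^ 20)
        (Y := (imSet L A).card) 3 (by norm_num) (by positivity) (by norm_num) hY
        (by
          rw [div_le_iff₀ hE]
          refine h.trans ?_
          have : 0 ≤ (affEnergy L : ℝ) * ((imSet L A).card : ℝ) ^ 3 := by positivity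
          nlinarith)
      exact_mod_cast this
    · refine (min_le_left _ _).trans ?_
      have : (A.card : ℝ) ^ 2 ≤ 8 * (imSet L A).card := by exact_mod_cast h8.le
      linarith
  · intro p hp A L hA hLne hL
    have hE : (0 : ℝ) < affEnergy L := by exact_mod_cast LI.energy_pos L hLne
    rw [one_div, inv_mul_le_iff₀ (by positivity)]
    have hY : (0 : ℝ) ≤ (imSet L A).card := by positivity
    rcases le_or_gt (8 * (imSet L A).card) p with h8p | h8p
    · rcases le_or_gt (8 * (imSet L A).card) (A.card ^ 2) with h8 | h8
      · have h := LI.fp_case p A L hA hLne hL h8 h8p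
        refine (min_le_right _ _).trans ((min_le_right _ _).trans ?_)
        have := LI.root_bound (Z := (A.card : ℝ) ^ 3 * (L.card : ℝ) ^ 4 / (affEnergy L : ℝ)) (D := 10 ^ 20)
          (Y := (imSet L A).card) 4 (by norm_num) (by positivity) (by norm_num) hY
          (by
            rw [div_le_iff₀ hE]
            refine h.trans ?_
            have : 0 ≤ (affEnergy L : ℝ) * ((imSet L A).card : ℝ) ^ 4 := by positivity
            nlinarith)
        exact_mod_cast this
      · refine (min_le_right _ _).trans ((min_le_left _ _).trans ?_)
        have : (A.card : ℝ) ^ 2 ≤ 8 * (imSet L A).card := by exact_mod_cast h8.le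
        linarith
    · refine (min_le_left _ _).trans ?_
      have : (p : ℝ) ≤ 8 * (imSet L A).card := by exact_mod_cast h8p.le
      linarith
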